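/- arXiv:2107.01089 — 2 statements merged into one kernel-verified Lean document; each statement's English description precedes it below -/
import Mathlib

section
/- Let k ≤ −2 be an integer and 1 ≤ p ≤ q ≤ ∞. Then there is a constant C independent of k and g such that ‖r^{1/q} sup_{1<t<2} |φ_k(r) 𝒜_t 𝒫_{<−k} g|‖_{L^q_{r,x₃}} ≤ C · 2^{3k/q − 2k/p} ‖g‖_{L^p}. -/
open MeasureTheory Real Set
open scoped ENNReal

noncomputable section

/-- Euclidean norm on `ℝ²` (the product norm on `ℝ × ℝ` is the sup norm, so we
spell out the Euclidean one). -/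
def enorm2 (ξ : ℝ × ℝ) : ℝ := Real.sqrt (ξ.1 ^ 2 + ξ.2 ^ 2)

/-- Fourier transform on `ℝ²` (nonunitary convention). -/
def ft2 (g : ℝ × ℝ → ℂ) (ξ : ℝ × ℝ) : ℂ :=
  ∫ y : ℝ × ℝ, Complex.exp (-(Complex.I) * ((y.1 * ξ.1 + y.2 * ξ.2 : ℝ) : ℂ)) * g y

/-- Fourier transform of the arclength measure `dσ` on the unit circle in `ℝ²`. -/
def sigmaHat (ξ : ℝ × ℝ) : ℂ :=
  ∫ θ in Set.Ioc (0:ℝ) (2 * π),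
    Complex.exp (-(Complex.I) * ((ξ.1 * Real.cos θ + ξ.2 * Real.sin θ : ℝ) : ℂ))

/-- The operator `𝒜_t g(r,x₃) = (2π)⁻² ∫ e^{i(((r²+t²)/2)ξ₁+x₃ξ₂)} \widehat{dσ}(trξ) ĝ(ξ) dξ`. -/
def Aop (g : ℝ × ℝ → ℂ) (t r x₃ : ℝ) : ℂ :=
  (((2 * π) ^ (-2 : ℤ) : ℝ) : ℂ) *
    ∫ ξ : ℝ × ℝ,
      Complex.exp (Complex.I * ((((r ^ 2 + t ^ 2) / 2) * ξ.1 + x₃ * ξ.2 : ℝ) : ℂ)) *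
        sigmaHat (t * r * ξ.1, t * r * ξ.2) * ft2 g ξ

/-- A Littlewood–Paley bump: nonnegative, smooth, supported in `[1−10⁻³, 2+10⁻³]`,
with `∑_{j∈ℤ} φ(2^{−j}s) = 1` for all `s > 0`. -/
def IsLPBump (φ : ℝ → ℝ) : Prop :=
  ContDiff ℝ (⊤ : ℕ∞) φ ∧ (∀ s, 0 ≤ φ s) ∧
    Function.support φ ⊆ Set.Icc (1 - 1/1000) (2 + 1/1000) ∧
    ∀ s : ℝ, 0 < s → HasSum (fun j : ℤ => φ ((2:ℝ) ^ (-j) * s)) 1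

/-- The Littlewood–Paley projection `𝒫_j`, defined via its multiplier `φ(2^{−j}|ξ|)`. -/
def proj (φ : ℝ → ℝ) (j : ℤ) (g : ℝ × ℝ → ℂ) (x : ℝ × ℝ) : ℂ :=
  (((2 * π) ^ (-2 : ℤ) : ℝ) : ℂ) *
    ∫ ξ : ℝ × ℝ,
      Complex.exp (Complex.I * ((x.1 * ξ.1 + x.2 * ξ.2 : ℝ) : ℂ)) *
        ((φ ((2:ℝ) ^ (-j) * enorm2 ξ) : ℝ) : ℂ) * ft2 g ξ

/-- `φ_{<ℓ}(s) = ∑_{j<ℓ} φ(2^{−j} s)`. -/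
def philt (φ : ℝ → ℝ) (l : ℤ) (s : ℝ) : ℝ :=
  ∑' j : ℤ, if j < l then φ ((2:ℝ) ^ (-j) * s) else 0

/-- The projection `𝒫_{<ℓ}`, with multiplier `φ_{<ℓ}(|ξ|)`. -/
def projLt (φ : ℝ → ℝ) (l : ℤ) (g : ℝ × ℝ → ℂ) (x : ℝ × ℝ) : ℂ :=
  (((2 * π) ^ (-2 : ℤ) : ℝ) : ℂ) *
    ∫ ξ : ℝ × ℝ,
      Complex.exp (Complex.I * ((x.1 * ξ.1 + x.2 * ξ.2 : ℝ) : ℂ)) *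
        ((philt φ l (enorm2 ξ) : ℝ) : ℂ) * ft2 g ξ


/-! ### Littlewood–Paley bumps -/

namespace IsLPBump

variable {φ : ℝ → ℝ}

lemma eq_zero_of_lt (hφ : IsLPBump φ) {s : ℝ} (hs : s < 999 / 1000) : φ s = 0 := by
  by_contra h
  have := (hφ.2.2.1 h).1
  linarith

lemma eq_zero_of_gt (hφ : IsLPBump φ) {s : ℝ} (hs : 2001 / 1000 < s) : φ s = 0 := by
  by_contra h
  have := (hφ.2.2.1 h).2
  linarith

lemma le_one (hφ : IsLPBump φ) (s : ℝ) : φ s ≤ 1 := by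
  rcases le_or_gt s 0 with hs | hs
  · rw [hφ.eq_zero_of_lt (by linarith)]
    exact zero_le_one
  · simpa using le_hasSum (hφ.2.2.2 s hs) 0 (fun j _ => hφ.2.1 _)

end IsLPBump

/-- The closed form of `philt φ 0`, extended by `1` to the origin. -/
def lowCut (φ : ℝ → ℝ) (s : ℝ) : ℝ := if s < 3 / 2 then 1 - φ s else 0

lemma zpow_neg_mul_eq (l j : ℤ) (s : ℝ) :
    (2:ℝ) ^ (-j) * s = (2:ℝ) ^ (l - j) * ((2:ℝ) ^ (-l) * s) := by
  rw [← mul_assoc, ← zpow_add₀ two_ne_zero]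
  congr 2
  ring

lemma philt_eq_lowCut {φ : ℝ → ℝ} (hφ : IsLPBump φ) (l : ℤ) {s : ℝ} (hs : 0 < s) :
    philt φ l s = lowCut φ ((2:ℝ) ^ (-l) * s) := by
  have hu : 0 < (2:ℝ) ^ (-l) * s := by positivity
  unfold philt lowCut
  split_ifs with h
  · have h1 := (hφ.2.2.2 s hs).sub (hasSum_ite_eq l (φ ((2:ℝ) ^ (-l) * s)))
    refine (h1.congr_fun ?_).tsum_eq
    intro j
    rcases lt_trichotomy j l with hj | hj | hj
    · simp [hj, hj.ne]
    · simp [hj]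
    · have h2 : (2:ℝ) ^ (l - j) ≤ 2 ^ (-1 : ℤ) := zpow_le_zpow_right₀ one_le_two (by lia)
      have h3 : φ ((2:ℝ) ^ (-j) * s) = 0 := by
        rw [zpow_neg_mul_eq l]
        apply hφ.eq_zero_of_lt
        rw [zpow_neg_one] at h2
        nlinarith
      simp only [if_neg hj.not_gt, if_neg hj.ne', h3, sub_zero]
  · refine (tsum_congr fun j => ?_).trans tsum_zero
    split_ifs with hj
    · have h2 : (2:ℝ) ^ (1 : ℤ) ≤ 2 ^ (l - j) := zpow_le_zpow_right₀ one_le_two (by lia)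
      rw [zpow_neg_mul_eq l]
      apply hφ.eq_zero_of_gt
      rw [zpow_one] at h2
      nlinarith
    · rfl

lemma lowCut_eq_zero {φ : ℝ → ℝ} (hφ : IsLPBump φ) {s : ℝ} (hs : 101 / 100 < s) :
    lowCut φ s = 0 := by
  unfold lowCut
  split_ifs with h
  · have h1 : HasSum (fun j : ℤ => φ ((2:ℝ) ^ (-j) * s)) (φ ((2:ℝ) ^ (-(0:ℤ)) * s)) := by
      apply hasSum_single
      intro j hj
      rcases lt_or_gt_of_ne hj with hj | hj
      · have h2 : (2:ℝ) ^ (1 : ℤ) ≤ 2 ^ (-j) := zpow_le_zpow_right₀ one_le_two (by lia)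
        rw [zpow_one] at h2
        exact hφ.eq_zero_of_gt (by nlinarith)
      · have h2 : (2:ℝ) ^ (-j) ≤ 2 ^ (-1 : ℤ) := zpow_le_zpow_right₀ one_le_two (by lia)
        rw [zpow_neg_one] at h2
        exact hφ.eq_zero_of_lt (by nlinarith)
    have h2 := h1.unique (hφ.2.2.2 s (by linarith))
    simp at h2
    simp [h2]
  · rfl

lemma contDiff_lowCut_norm {φ : ℝ → ℝ} (hφ : IsLPBump φ) :
    ContDiff ℝ (⊤ : ℕ∞) (fun z : ℂ => lowCut φ ‖z‖) := by
  rw [contDiff_iff_contDiffAt]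
  intro z
  have hn : Continuous (fun z : ℂ => ‖z‖) := continuous_norm
  rcases lt_or_ge ‖z‖ (9 / 10) with h | h
  · refine (contDiffAt_const (c := (1:ℝ))).congr_of_eventuallyEq ?_
    filter_upwards [(isOpen_Iio.preimage hn).mem_nhds h] with w hw
    have hw : ‖w‖ < 9 / 10 := hw
    simp [lowCut, hφ.eq_zero_of_lt (show ‖w‖ < 999 / 1000 by linarith),
      show ‖w‖ < 3 / 2 by linarith]
  rcases lt_or_ge ‖z‖ (3 / 2) with h' | h'
  · have hz : z ≠ 0 := by
      rintro rfl
      norm_num at h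
    refine ContDiffAt.congr_of_eventuallyEq (f := fun z => 1 - φ ‖z‖) ?_ ?_
    · exact contDiffAt_const.sub (hφ.1.contDiffAt.comp z (contDiffAt_norm ℝ hz))
    · filter_upwards [(isOpen_Iio.preimage hn).mem_nhds h'] with w hw
      exact if_pos hw
  · refine (contDiffAt_const (c := (0:ℝ))).congr_of_eventuallyEq ?_
    have h'' : 101 / 100 < ‖z‖ := by linarith
    filter_upwards [(isOpen_Ioi.preimage hn).mem_nhds h''] with w hw
    exact lowCut_eq_zero hφ hw

/-! ### The kernel of the projection -/

/-- The plane wave `e^{i x·ξ}`. -/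
def plane (x ξ : ℝ × ℝ) : ℂ := Complex.exp (Complex.I * ((x.1 * ξ.1 + x.2 * ξ.2 : ℝ) : ℂ))

lemma plane_add (x y ξ : ℝ × ℝ) : plane (x + y) ξ = plane x ξ * plane y ξ := by
  unfold plane
  rw [← Complex.exp_add]
  congr 1
  push_cast [Prod.fst_add, Prod.snd_add]
  ring

@[simp] lemma norm_plane (x ξ : ℝ × ℝ) : ‖plane x ξ‖ = 1 := by
  unfold plane
  rw [mul_comm]
  exact Complex.norm_exp_ofReal_mul_I _

@[fun_prop] lemma Continuous.plane {X : Type*} [TopologicalSpace X] {f g : X → ℝ × ℝ}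
    (hf : Continuous f) (hg : Continuous g) : Continuous (fun a => plane (f a) (g a)) := by
  unfold _root_.plane
  fun_prop

lemma plane_comm (x ξ : ℝ × ℝ) : plane x ξ = plane ξ x := by
  simp only [plane, mul_comm]

lemma plane_smul (a : ℝ) (x ξ : ℝ × ℝ) : plane (a • x) ξ = plane x (a • ξ) := by
  simp only [plane, Prod.smul_fst, Prod.smul_snd, smul_eq_mul]
  congr 4 <;> ring

lemma ft2_eq (g : ℝ × ℝ → ℂ) (ξ : ℝ × ℝ) : ft2 g ξ = ∫ y, plane (-y) ξ * g y := by
  unfold ft2 plane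
  refine integral_congr_ae (.of_forall fun y => ?_)
  simp only [Prod.fst_neg, Prod.snd_neg]
  congr 2
  push_cast
  ring

lemma enorm2_smul {a : ℝ} (ha : 0 ≤ a) (ξ : ℝ × ℝ) : enorm2 (a • ξ) = a * enorm2 ξ := by
  unfold enorm2
  rw [Prod.smul_fst, Prod.smul_snd, smul_eq_mul, smul_eq_mul,
    show (a * ξ.1) ^ 2 + (a * ξ.2) ^ 2 = a ^ 2 * (ξ.1 ^ 2 + ξ.2 ^ 2) by ring,
    Real.sqrt_mul (sq_nonneg a), Real.sqrt_sq ha]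

lemma integral_comp_smul_prod {a : ℝ} (ha : 0 < a) (f : ℝ × ℝ → ℂ) :
    ∫ x, f (a • x) = (((a ^ 2)⁻¹ : ℝ) : ℂ) * ∫ x, f x := by
  rw [Measure.integral_comp_smul, Module.finrank_prod, Module.finrank_self,
    abs_of_pos (by positivity), Complex.real_smul]

/-- The weight dominating the kernel. -/
def cauchyWeight (s : ℝ) : ℝ := (1 + s ^ 2)⁻¹

lemma exists_kernel {φ : ℝ → ℝ} (hφ : IsLPBump φ) :
    ∃ S : ℝ × ℝ → ℂ, Integrable S ∧
      Integrable (fun ξ : ℝ × ℝ => (lowCut φ (enorm2 ξ) : ℂ)) ∧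
      (∃ C : ℝ, 0 < C ∧ ∀ x, ‖S x‖ ≤ C * (cauchyWeight x.1 * cauchyWeight x.2)) ∧
      (∀ x, ∫ ξ, plane x ξ * (lowCut φ (enorm2 ξ) : ℂ) = (((2 * π) ^ 2 : ℝ) : ℂ) * S x) ∧
      ∀ ξ, ft2 S ξ = lowCut φ (enorm2 ξ) := by
  have hcd : ContDiff ℝ (⊤ : ℕ∞) (fun z : ℂ => (lowCut φ ‖(2 * π) • z‖ : ℂ)) :=
    Complex.ofRealCLM.contDiff.comp
      ((contDiff_lowCut_norm hφ).comp (contDiff_const_smul (2 * π)))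
  have hcs : HasCompactSupport (fun z : ℂ => (lowCut φ ‖(2 * π) • z‖ : ℂ)) := by
    refine HasCompactSupport.of_support_subset_isCompact (isCompact_closedBall (0:ℂ) 1) ?_
    intro z hz
    by_contra h
    rw [mem_closedBall_zero_iff, not_le] at h
    refine hz ?_
    simp only
    rw [lowCut_eq_zero hφ, Complex.ofReal_zero]
    rw [norm_smul, Real.norm_of_nonneg (by positivity)]
    nlinarith [Real.pi_gt_three]
  let M : SchwartzMap ℂ ℂ := hcs.toSchwartzMap hcd
  have hM : ∀ z : ℂ, M z = lowCut φ ‖(2 * π) • z‖ := fun z => rfl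
  let T : SchwartzMap ℂ ℂ := FourierTransform.fourierInv M
  have hT : ∀ z : ℂ, T z = ∫ v : ℂ, Complex.exp (↑(2 * π * inner ℝ v z) * Complex.I) • M v := by
    intro z
    rw [← Real.fourierInv_eq', ← SchwartzMap.fourierInv_coe]
  have hMT : ∀ z : ℂ, M z =
      ∫ v : ℂ, Complex.exp (↑(-2 * π * inner ℝ v z) * Complex.I) • T v := by
    intro z
    rw [← Real.fourier_eq', ← SchwartzMap.fourier_coe]
    simp [T]
  have hint : ∀ f : ℝ × ℝ → ℂ, ∫ v : ℂ, f (v.re, v.im) = ∫ x, f x := fun f =>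
    Complex.volume_preserving_equiv_real_prod.integral_comp
      Complex.measurableEquivRealProd.measurableEmbedding f
  have hnorm : ∀ x : ℝ × ℝ, ‖(⟨x.1, x.2⟩ : ℂ)‖ = enorm2 x := by
    intro x
    rw [Complex.norm_eq_sqrt_sq_add_sq, enorm2]
  have hsm : ∀ x : ℝ × ℝ, (2 * π) • (⟨x.1, x.2⟩ : ℂ) = ⟨((2 * π) • x).1, ((2 * π) • x).2⟩ := by
    intro x
    apply Complex.ext <;> simp
  have hintegrable : ∀ f : ℝ × ℝ → ℂ, Integrable (fun v : ℂ => f (v.re, v.im)) → Integrable f :=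
    fun f => (Complex.volume_preserving_equiv_real_prod.integrable_comp_emb
      Complex.measurableEquivRealProd.measurableEmbedding).1
  refine ⟨fun x => T ⟨x.1, x.2⟩, hintegrable _ T.integrable, ?_, ?_, ?_, ?_⟩
  · rw [← integrable_comp_smul_iff volume _ (show (2 * π) ≠ 0 by positivity)]
    refine hintegrable _ ((M.integrable (μ := volume)).congr (.of_forall fun v => ?_))
    simp only [hM]
    rw [← hnorm, ← hsm]
  · refine ⟨2 ^ 4 * ((Finset.Iic (4, 0)).sup fun m => SchwartzMap.seminorm ℝ m.1 m.2) T + 1,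
      by positivity, fun x => ?_⟩
    have h := SchwartzMap.one_add_le_sup_seminorm_apply (𝕜 := ℝ) (m := (4, 0)) le_rfl le_rfl T
      ⟨x.1, x.2⟩
    rw [norm_iteratedFDeriv_zero, hnorm] at h
    have h1 : 0 ≤ enorm2 x := Real.sqrt_nonneg _
    have h2 : enorm2 x ^ 2 = x.1 ^ 2 + x.2 ^ 2 := Real.sq_sqrt (by positivity)
    have h3 : 1 + x.1 ^ 2 ≤ (1 + enorm2 x) ^ 2 := by nlinarith [sq_nonneg x.2]
    have h4 : 1 + x.2 ^ 2 ≤ (1 + enorm2 x) ^ 2 := by nlinarith [sq_nonneg x.1]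
    have h5 : (1 + x.1 ^ 2) * (1 + x.2 ^ 2) ≤ (1 + enorm2 x) ^ 4 := by
      calc _ ≤ (1 + enorm2 x) ^ 2 * (1 + enorm2 x) ^ 2 := by gcongr
        _ = _ := by ring
    rw [cauchyWeight, cauchyWeight, ← mul_inv, ← div_eq_mul_inv, le_div_iff₀ (by positivity)]
    calc _ ≤ ‖T ⟨x.1, x.2⟩‖ * (1 + enorm2 x) ^ 4 := by gcongr
      _ ≤ _ := by rw [mul_comm]; exact h.trans (le_add_of_nonneg_right zero_le_one)
  · intro x
    have h := integral_comp_smul_prod (a := 2 * π) (by positivity)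
      (fun ξ => plane x ξ * (lowCut φ (enorm2 ξ) : ℂ))
    have h' : ∫ ξ : ℝ × ℝ, plane x ((2 * π) • ξ) * (lowCut φ (enorm2 ((2 * π) • ξ)) : ℂ)
        = T ⟨x.1, x.2⟩ := by
      rw [hT, ← hint]
      refine integral_congr_ae (.of_forall fun v => ?_)
      simp only [smul_eq_mul, hM]
      rw [← hnorm, ← hsm]
      congr 1
      simp only [plane, Complex.inner]
      congr 1
      simp
      ring
    rw [h'] at h
    beta_reduce
    rw [h, ← mul_assoc, ← Complex.ofReal_mul, mul_inv_cancel₀ (by positivity), Complex.ofReal_one,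
      one_mul]
  · intro ξ
    have h := hMT ⟨((2 * π)⁻¹ • ξ).1, ((2 * π)⁻¹ • ξ).2⟩
    rw [hM, hsm, smul_inv_smul₀ (by positivity), hnorm] at h
    rw [h, ft2_eq, ← hint]
    refine integral_congr_ae (.of_forall fun v => ?_)
    simp only [smul_eq_mul]
    congr 1
    simp only [plane, Complex.inner]
    congr 1
    simp
    field_simp
    ring

lemma exists_scaled_kernel {φ : ℝ → ℝ} (hφ : IsLPBump φ) :
    ∃ C : ℝ, 0 < C ∧ ∀ s : ℝ, 0 < s → ∃ K : ℝ × ℝ → ℂ, Integrable K ∧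
      Integrable (fun ξ : ℝ × ℝ => (lowCut φ (s⁻¹ * enorm2 ξ) : ℂ)) ∧
      (∀ x, ‖K x‖ ≤ C * s ^ 2 * (cauchyWeight (s * x.1) * cauchyWeight (s * x.2))) ∧
      (∀ x, ∫ ξ, plane x ξ * (lowCut φ (s⁻¹ * enorm2 ξ) : ℂ)
        = (((2 * π) ^ 2 : ℝ) : ℂ) * K x) ∧
      ∀ ξ, ft2 K ξ = lowCut φ (s⁻¹ * enorm2 ξ) := by
  obtain ⟨S, hS, hm, ⟨C, hC, hb⟩, hinv, hft⟩ := exists_kernel hφ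
  refine ⟨C, hC, fun s hs => ⟨fun x => ((s ^ 2 : ℝ) : ℂ) * S (s • x), ?_, ?_, ?_, ?_, ?_⟩⟩
  · exact ((integrable_comp_smul_iff volume S hs.ne').2 hS).const_mul _
  · refine ((integrable_comp_smul_iff volume _ (inv_pos.2 hs).ne').2 hm).congr
      (.of_forall fun ξ => ?_)
    simp only [enorm2_smul (inv_pos.2 hs).le]
  · intro x
    have h := hb (s • x)
    rw [norm_mul, Complex.norm_real, Real.norm_of_nonneg (by positivity)]
    calc s ^ 2 * ‖S (s • x)‖ ≤ s ^ 2 * (C * (cauchyWeight (s • x).1 * cauchyWeight (s • x).2)) := by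
          gcongr
      _ = _ := by simp only [Prod.smul_fst, Prod.smul_snd, smul_eq_mul]; ring
  · intro x
    have h := integral_comp_smul_prod (inv_pos.2 hs)
      (fun ξ => plane (s • x) ξ * (lowCut φ (enorm2 ξ) : ℂ))
    simp only [plane_smul, smul_inv_smul₀ hs.ne', enorm2_smul (inv_pos.2 hs).le] at h
    rw [h]
    simp only [← plane_smul]
    rw [hinv, inv_pow, inv_inv]
    ring
  · intro ξ
    have h := integral_comp_smul_prod hs (fun y => plane (-y) (s⁻¹ • ξ) * S y)
    rw [← ft2_eq, hft, enorm2_smul (inv_pos.2 hs).le] at h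
    rw [ft2_eq]
    calc _ = ∫ y, ((s ^ 2 : ℝ) : ℂ) * (plane (-(s • y)) (s⁻¹ • ξ) * S (s • y)) := by
          refine integral_congr_ae (.of_forall fun y => ?_)
          simp only [← smul_neg, plane_smul, smul_inv_smul₀ hs.ne']
          ring
      _ = _ := by
          rw [integral_const_mul, h, ← mul_assoc, ← Complex.ofReal_mul,
            mul_inv_cancel₀ (by positivity), Complex.ofReal_one, one_mul]

/-! ### Representation of the averages of the projection -/

lemma norm_ft2_le (g : ℝ × ℝ → ℂ) (ξ : ℝ × ℝ) : ‖ft2 g ξ‖ ≤ ∫ y, ‖g y‖ := by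
  rw [ft2_eq]
  refine (norm_integral_le_integral_norm _).trans_eq ?_
  simp

lemma continuous_ft2 {g : ℝ × ℝ → ℂ} (hg : Integrable g) : Continuous (ft2 g) := by
  simp only [funext (ft2_eq g)]
  refine continuous_of_dominated (bound := fun y => ‖g y‖) ?_ ?_ hg.norm ?_
  · intro ξ
    exact (Continuous.aestronglyMeasurable (by fun_prop)).mul hg.1
  · intro ξ
    exact .of_forall fun y => by simp
  · exact .of_forall fun y => by fun_prop

lemma integrable_mul_ft2 {g m : ℝ × ℝ → ℂ} (hm : Integrable m) (hg : Integrable g) :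
    Integrable (fun ξ => m ξ * ft2 g ξ) :=
  hm.mul_bdd (c := ∫ y, ‖g y‖) (continuous_ft2 hg).aestronglyMeasurable
    (.of_forall fun ξ => norm_ft2_le g ξ)

lemma integrable_plane_mul {X : Type*} [TopologicalSpace X] [MeasurableSpace X]
    [OpensMeasurableSpace X] [SecondCountableTopologyEither X ℂ] {μ : Measure X}
    {F : X → ℂ} (hF : Integrable F μ) {u v : X → ℝ × ℝ} (hu : Continuous u) (hv : Continuous v) :
    Integrable (fun a => plane (u a) (v a) * F a) μ :=
  hF.bdd_mul (c := 1) (hu.plane hv).aestronglyMeasurable (.of_forall fun a => by simp)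

lemma two_pi_zpow_mul (z : ℂ) :
    (((2 * π) ^ (-2 : ℤ) : ℝ) : ℂ) * ((((2 * π) ^ 2 : ℝ) : ℂ) * z) = z := by
  rw [← mul_assoc, ← Complex.ofReal_mul, zpow_neg, zpow_ofNat,
    inv_mul_cancel₀ (by positivity), Complex.ofReal_one, one_mul]

lemma inversion_integral_eq_convolution {g m K : ℝ × ℝ → ℂ} (hg : Integrable g) (hm : Integrable m)
    (hK : ∀ x, ∫ ξ, plane x ξ * m ξ = (((2 * π) ^ 2 : ℝ) : ℂ) * K x) (x : ℝ × ℝ) :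
    (((2 * π) ^ (-2 : ℤ) : ℝ) : ℂ) * ∫ ξ, plane x ξ * (m ξ * ft2 g ξ)
      = ∫ y, K (x - y) * g y := by
  have h1 : ∫ ξ, plane x ξ * (m ξ * ft2 g ξ)
      = ∫ ξ, ∫ y, plane (x - y) ξ * (m ξ * g y) := by
    refine integral_congr_ae (.of_forall fun ξ => ?_)
    simp only [ft2_eq]
    rw [← mul_assoc, ← integral_const_mul]
    refine integral_congr_ae (.of_forall fun y => ?_)
    simp only [sub_eq_add_neg, plane_add]
    ring
  have h2 : Integrable (Function.uncurry fun ξ y => plane (x - y) ξ * (m ξ * g y))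
      (volume.prod volume) :=
    integrable_plane_mul (hm.mul_prod hg) (u := fun z => x - z.2) (v := fun z => z.1)
      (by fun_prop) (by fun_prop)
  rw [h1, integral_integral_swap h2, ← integral_const_mul]
  refine integral_congr_ae (.of_forall fun y => ?_)
  simp only [← mul_assoc]
  rw [integral_mul_const, hK, ← mul_assoc, two_pi_zpow_mul]

lemma ft2_convolution {g K : ℝ × ℝ → ℂ} (hg : Integrable g) (hK : Integrable K) (ξ : ℝ × ℝ) :
    ft2 (fun x => ∫ y, K (x - y) * g y) ξ = ft2 K ξ * ft2 g ξ := by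
  have h1 : ft2 (fun x => ∫ y, K (x - y) * g y) ξ
      = ∫ x, ∫ y, plane (-x) ξ * (g y * K (x - y)) := by
    rw [ft2_eq]
    refine integral_congr_ae (.of_forall fun x => ?_)
    simp only
    rw [← integral_const_mul]
    simp only [mul_comm (g _)]
  have h2 : Integrable (Function.uncurry fun x y => plane (-x) ξ * (g y * K (x - y)))
      (volume.prod volume) :=
    integrable_plane_mul (hg.convolution_integrand (ContinuousLinearMap.mul ℝ ℂ) hK)
      (u := fun z : (ℝ × ℝ) × (ℝ × ℝ) => -z.1) (v := fun _ => ξ) (by fun_prop) (by fun_prop)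
  rw [h1, integral_integral_swap h2, ft2_eq g, ← integral_const_mul]
  refine integral_congr_ae (.of_forall fun y => ?_)
  simp only [ft2_eq K]
  rw [← integral_sub_right_eq_self (fun x => plane (-x) ξ * K x) y, ← integral_mul_const]
  refine integral_congr_ae (.of_forall fun x => ?_)
  simp only
  rw [show -x = -(x - y) + -y by abel, plane_add]
  ring

lemma sigmaHat_eq (ξ : ℝ × ℝ) :
    sigmaHat ξ = ∫ θ in Ioc (0:ℝ) (2 * π), plane (-(Real.cos θ, Real.sin θ)) ξ := by
  unfold sigmaHat plane
  refine integral_congr_ae (.of_forall fun θ => ?_)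
  simp only [Prod.fst_neg, Prod.snd_neg]
  congr 1
  push_cast
  ring

lemma integral_plane_mul_sigmaHat {F : ℝ × ℝ → ℂ} (hF : Integrable F) (x : ℝ × ℝ) (a : ℝ) :
    ∫ ξ, plane x ξ * sigmaHat (a • ξ) * F ξ
      = ∫ θ in Ioc (0:ℝ) (2 * π), ∫ ξ, plane (x - a • (Real.cos θ, Real.sin θ)) ξ * F ξ := by
  have h1 : ∫ ξ, plane x ξ * sigmaHat (a • ξ) * F ξ
      = ∫ ξ, ∫ θ in Ioc (0:ℝ) (2 * π), plane (x - a • (Real.cos θ, Real.sin θ)) ξ * F ξ := by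
    refine integral_congr_ae (.of_forall fun ξ => ?_)
    simp only [sigmaHat_eq]
    rw [← integral_const_mul, ← integral_mul_const]
    refine integral_congr_ae (.of_forall fun θ => ?_)
    simp only [sub_eq_add_neg, plane_add, ← smul_neg, plane_smul]
  rw [h1]
  refine integral_integral_swap ?_
  have h2 : Integrable (fun z : (ℝ × ℝ) × ℝ => F z.1 * (1 : ℂ))
      (volume.prod (volume.restrict (Ioc (0:ℝ) (2 * π)))) :=
    hF.mul_prod (integrable_const (1:ℂ))
  simp only [mul_one] at h2
  exact integrable_plane_mul h2
    (u := fun z : (ℝ × ℝ) × ℝ => x - a • (Real.cos z.2, Real.sin z.2)) (v := fun z => z.1)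
    (by fun_prop) (by fun_prop)

lemma ae_enorm2_pos : ∀ᵐ ξ : ℝ × ℝ, 0 < enorm2 ξ := by
  filter_upwards [Measure.ae_ne volume (0 : ℝ × ℝ)] with ξ hξ
  refine Real.sqrt_pos.2 ?_
  by_contra! h
  refine hξ (Prod.ext ?_ ?_)
  · simp only [Prod.fst_zero]; nlinarith [sq_nonneg ξ.1, sq_nonneg ξ.2]
  · simp only [Prod.snd_zero]; nlinarith [sq_nonneg ξ.1, sq_nonneg ξ.2]

lemma Aop_projLt_eq {φ : ℝ → ℝ} (hφ : IsLPBump φ) {l : ℤ} {g K : ℝ × ℝ → ℂ} (hg : Integrable g)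
    (hK : Integrable K)
    (hm : Integrable (fun ξ : ℝ × ℝ => (lowCut φ ((2:ℝ) ^ (-l) * enorm2 ξ) : ℂ)))
    (hinv : ∀ x, ∫ ξ, plane x ξ * (lowCut φ ((2:ℝ) ^ (-l) * enorm2 ξ) : ℂ)
      = (((2 * π) ^ 2 : ℝ) : ℂ) * K x)
    (hft : ∀ ξ, ft2 K ξ = lowCut φ ((2:ℝ) ^ (-l) * enorm2 ξ)) (t r x₃ : ℝ) :
    Aop (projLt φ l g) t r x₃ = ∫ θ in Ioc (0:ℝ) (2 * π),
      ∫ y, K (((r ^ 2 + t ^ 2) / 2, x₃) - (t * r) • (Real.cos θ, Real.sin θ) - y) * g y := by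
  have hproj : projLt φ l g = fun x => ∫ y, K (x - y) * g y := by
    ext x
    rw [← inversion_integral_eq_convolution hg hm hinv x]
    unfold projLt
    congr 1
    refine integral_congr_ae ?_
    filter_upwards [ae_enorm2_pos] with ξ hξ
    rw [philt_eq_lowCut hφ l hξ, mul_assoc]
    rfl
  have hF := integrable_mul_ft2 hm hg
  have h := integral_plane_mul_sigmaHat hF ((r ^ 2 + t ^ 2) / 2, x₃) (t * r)
  calc Aop (projLt φ l g) t r x₃ = (((2 * π) ^ (-2 : ℤ) : ℝ) : ℂ) *
        ∫ ξ, plane ((r ^ 2 + t ^ 2) / 2, x₃) ξ * sigmaHat ((t * r) • ξ) *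
          ((lowCut φ ((2:ℝ) ^ (-l) * enorm2 ξ) : ℂ) * ft2 g ξ) := by
        rw [hproj]
        unfold Aop
        congr 1
        refine integral_congr_ae (.of_forall fun ξ => ?_)
        simp only [ft2_convolution hg hK, hft]
        rfl
    _ = _ := by
        rw [h, ← integral_const_mul]
        refine integral_congr_ae (.of_forall fun θ => ?_)
        exact inversion_integral_eq_convolution hg hm hinv _

/-! ### Weighted estimates -/

lemma cauchyWeight_pos (s : ℝ) : 0 < cauchyWeight s := by
  unfold cauchyWeight
  positivity

lemma cauchyWeight_le_one (s : ℝ) : cauchyWeight s ≤ 1 :=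
  inv_le_one_of_one_le₀ (by nlinarith [sq_nonneg s])

@[fun_prop] lemma continuous_cauchyWeight : Continuous cauchyWeight := by
  unfold cauchyWeight
  exact Continuous.inv₀ (by fun_prop) (fun s => by positivity)

@[fun_prop] lemma measurable_cauchyWeight : Measurable cauchyWeight :=
  continuous_cauchyWeight.measurable

lemma cauchyWeight_le_of_abs_sub_le {a b : ℝ} (h : |a - b| ≤ 4.1) :
    cauchyWeight a ≤ 36 * cauchyWeight b := by
  have h1 : (a - b) ^ 2 ≤ 4.1 ^ 2 := sq_le_sq' (by linarith [neg_le_of_abs_le h]) (le_of_abs_le h)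
  unfold cauchyWeight
  rw [← div_eq_mul_inv, inv_eq_one_div, div_le_div_iff₀ (by positivity) (by positivity)]
  nlinarith [sq_nonneg (2 * a - b), sq_nonneg a]

lemma lintegral_cauchyWeight {s : ℝ} (hs : 0 < s) (a : ℝ) :
    ∫⁻ u, ENNReal.ofReal (cauchyWeight (s * (a - u))) = ENNReal.ofReal (π / s) := by
  have h1 : Integrable (fun u => cauchyWeight (s * (a - u))) :=
    (integrable_inv_one_add_sq.comp_mul_left' hs.ne').comp_sub_left a
  rw [← ofReal_integral_eq_lintegral_ofReal h1 (.of_forall fun u => (cauchyWeight_pos _).le)]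
  congr 1
  rw [integral_sub_left_eq_self (fun u => cauchyWeight (s * u)) volume a,
    Measure.integral_comp_mul_left]
  unfold cauchyWeight
  rw [integral_univ_inv_one_add_sq, abs_of_pos (by positivity), smul_eq_mul]
  ring

/-- Weighted Lebesgue measure concentrated on the slab `|y₂ - x| ≲ s⁻¹`. -/
def slabMeasure (s x : ℝ) : Measure (ℝ × ℝ) :=
  volume.withDensity fun y => ENNReal.ofReal (36 * s ^ 2 * cauchyWeight (s * (x - y.2)))

lemma lintegral_kernel_mul_le {C s : ℝ} (hC : 0 < C) (hs : 0 < s) {K g : ℝ × ℝ → ℂ}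
    (hg : AEStronglyMeasurable g)
    (hK : ∀ x, ‖K x‖ ≤ C * s ^ 2 * (cauchyWeight (s * x.1) * cauchyWeight (s * x.2)))
    {p : ℝ≥0∞} (hp : 1 ≤ p) (X : ℝ × ℝ) (x : ℝ) (hx : |s * (X.2 - x)| ≤ 4.1) :
    ∫⁻ y, ‖K (X - y)‖ₑ * ‖g y‖ₑ ≤
      ENNReal.ofReal C * (ENNReal.ofReal (π ^ 2)) ^ (1 - 1 / p.toReal) *
        eLpNorm g p (slabMeasure s x) := by
  set d : ℝ × ℝ → ℝ := fun y =>
    s ^ 2 * (cauchyWeight (s * (X.1 - y.1)) * cauchyWeight (s * (X.2 - y.2))) with hd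
  have hdm : Measurable fun y => ENNReal.ofReal (d y) :=
    by fun_prop
  set μ : Measure (ℝ × ℝ) := volume.withDensity fun y => ENNReal.ofReal (d y) with hμ
  have hgμ : AEStronglyMeasurable g μ := hg.mono_ac (withDensity_absolutelyContinuous _ _)
  have huniv : μ univ = ENNReal.ofReal (π ^ 2) := by
    rw [hμ, withDensity_apply _ MeasurableSet.univ, Measure.restrict_univ]
    have h1 : ∀ y, ENNReal.ofReal (d y) = ENNReal.ofReal (s ^ 2) *
        (ENNReal.ofReal (cauchyWeight (s * (X.1 - y.1))) *
          ENNReal.ofReal (cauchyWeight (s * (X.2 - y.2)))) := by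
      intro y
      rw [hd, ENNReal.ofReal_mul (by positivity), ENNReal.ofReal_mul (cauchyWeight_pos _).le]
    simp only [h1]
    rw [lintegral_const_mul _ (by fun_prop), Measure.volume_eq_prod,
      lintegral_prod_mul (f := fun u => ENNReal.ofReal (cauchyWeight (s * (X.1 - u))))
        (g := fun u => ENNReal.ofReal (cauchyWeight (s * (X.2 - u))))
        (Measurable.aemeasurable (by fun_prop)) (Measurable.aemeasurable (by fun_prop)),
      lintegral_cauchyWeight hs, lintegral_cauchyWeight hs, ← ENNReal.ofReal_mul (by positivity),
      ← ENNReal.ofReal_mul (by positivity)]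
    congr 1
    field_simp
  have hle : μ ≤ slabMeasure s x := by
    refine withDensity_mono (.of_forall fun y => ENNReal.ofReal_le_ofReal ?_)
    have h1 : cauchyWeight (s * (X.2 - y.2)) ≤ 36 * cauchyWeight (s * (x - y.2)) := by
      apply cauchyWeight_le_of_abs_sub_le
      convert hx using 2
      ring
    calc d y ≤ s ^ 2 * (1 * (36 * cauchyWeight (s * (x - y.2)))) := by
          have := (cauchyWeight_pos (s * (X.2 - y.2))).le
          simp only [hd]
          gcongr
          exact cauchyWeight_le_one _
      _ = _ := by ring
  calc ∫⁻ y, ‖K (X - y)‖ₑ * ‖g y‖ₑ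
      ≤ ∫⁻ y, ENNReal.ofReal C * (ENNReal.ofReal (d y) * ‖g y‖ₑ) := by
        refine lintegral_mono fun y => ?_
        rw [← mul_assoc, ← ENNReal.ofReal_mul hC.le]
        gcongr
        rw [← ofReal_norm]
        refine ENNReal.ofReal_le_ofReal ((hK _).trans_eq ?_)
        simp only [hd, Prod.fst_sub, Prod.snd_sub]
        ring
    _ = ENNReal.ofReal C * eLpNorm g 1 μ := by
        rw [lintegral_const_mul' _ _ ENNReal.ofReal_ne_top,
          eLpNorm_one_eq_lintegral_enorm, hμ,
          lintegral_withDensity_eq_lintegral_mul₀ hdm.aemeasurable hg.enorm]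
        rfl
    _ ≤ ENNReal.ofReal C * (eLpNorm g p μ * μ univ ^ (1 / (1:ℝ≥0∞).toReal - 1 / p.toReal)) := by
        gcongr
        exact eLpNorm_le_eLpNorm_mul_rpow_measure_univ hp hgμ
    _ ≤ ENNReal.ofReal C * (eLpNorm g p (slabMeasure s x) *
          ENNReal.ofReal (π ^ 2) ^ (1 - 1 / p.toReal)) := by
        rw [huniv, ENNReal.toReal_one, div_one]
        gcongr
    _ = _ := by ring

lemma eLpNorm_slabMeasure_le {s : ℝ} (hs : 0 < s) (g : ℝ × ℝ → ℂ) (p : ℝ≥0∞) (x : ℝ) :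
    eLpNorm g p (slabMeasure s x) ≤
      ENNReal.ofReal (36 * s ^ 2) ^ (1 / p).toReal * eLpNorm g p volume := by
  have hle : slabMeasure s x ≤ ENNReal.ofReal (36 * s ^ 2) • volume := by
    rw [← withDensity_const]
    refine withDensity_mono (.of_forall fun y => ENNReal.ofReal_le_ofReal ?_)
    exact mul_le_of_le_one_right (by positivity) (cauchyWeight_le_one _)
  refine (eLpNorm_mono_measure g hle).trans_eq ?_
  rw [eLpNorm_smul_measure_of_ne_zero (by positivity), smul_eq_mul]

lemma eLpNorm_slabMeasure_rpow {s : ℝ} {g : ℝ × ℝ → ℂ}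
    (hg : AEStronglyMeasurable g) {p : ℝ≥0∞} (hp : p ≠ 0) (hp' : p ≠ ∞) (x : ℝ) :
    eLpNorm g p (slabMeasure s x) ^ p.toReal =
      ∫⁻ y : ℝ × ℝ, ENNReal.ofReal (36 * s ^ 2 * cauchyWeight (s * (x - y.2))) *
        ‖g y‖ₑ ^ p.toReal := by
  have hp0 : p.toReal ≠ 0 := (ENNReal.toReal_pos hp hp').ne'
  rw [eLpNorm_eq_lintegral_rpow_enorm_toReal hp hp', ← ENNReal.rpow_mul, one_div,
    inv_mul_cancel₀ hp0, ENNReal.rpow_one, slabMeasure,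
    lintegral_withDensity_eq_lintegral_mul₀ (Measurable.aemeasurable (by fun_prop))
      (hg.enorm.pow_const _)]
  rfl

lemma aemeasurable_slab_integrand (s : ℝ) {g : ℝ × ℝ → ℂ} (hg : AEStronglyMeasurable g) (e : ℝ) :
    AEMeasurable (fun z : ℝ × (ℝ × ℝ) =>
      ENNReal.ofReal (36 * s ^ 2 * cauchyWeight (s * (z.1 - z.2.2))) * ‖g z.2‖ₑ ^ e)
      (volume.prod volume) :=
  AEMeasurable.mul (Measurable.aemeasurable (by fun_prop)) ((hg.enorm.pow_const e).comp_snd)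

lemma lintegral_eLpNorm_slabMeasure {s : ℝ} (hs : 0 < s) {g : ℝ × ℝ → ℂ}
    (hg : AEStronglyMeasurable g) {p : ℝ≥0∞} (hp : p ≠ 0) (hp' : p ≠ ∞) :
    ∫⁻ x, eLpNorm g p (slabMeasure s x) ^ p.toReal =
      ENNReal.ofReal (36 * π * s) * eLpNorm g p volume ^ p.toReal := by
  have hp0 : p.toReal ≠ 0 := (ENNReal.toReal_pos hp hp').ne'
  simp only [eLpNorm_slabMeasure_rpow hg hp hp']
  rw [lintegral_lintegral_swap (aemeasurable_slab_integrand s hg _),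
    eLpNorm_eq_lintegral_rpow_enorm_toReal hp hp', ← ENNReal.rpow_mul, one_div,
    inv_mul_cancel₀ hp0, ENNReal.rpow_one, ← lintegral_const_mul'' _ (hg.enorm.pow_const _)]
  refine lintegral_congr fun y => ?_
  rw [lintegral_mul_const _ (by fun_prop)]
  congr 1
  have h1 : ∀ x, cauchyWeight (s * (x - y.2)) = cauchyWeight (s * (y.2 - x)) := by
    intro x
    unfold cauchyWeight
    congr 2
    ring
  simp only [h1, ENNReal.ofReal_mul (show 0 ≤ 36 * s ^ 2 by positivity)]
  rw [lintegral_const_mul _ (by fun_prop), lintegral_cauchyWeight hs,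
    ← ENNReal.ofReal_mul (by positivity)]
  congr 1
  field_simp

/-- The annulus `s r ≈ 1` carrying the radial cutoff. -/
def radialSupport (s : ℝ) : Set ℝ := Icc (999 / 1000 / s) (2001 / 1000 / s)

lemma lintegral_ofReal_radialSupport_le {s : ℝ} (hs : 0 < s) :
    ∫⁻ r in radialSupport s, ENNReal.ofReal r ≤ ENNReal.ofReal (5 / s ^ 2) := by
  calc ∫⁻ r in radialSupport s, ENNReal.ofReal r
      ≤ ∫⁻ r in radialSupport s, ENNReal.ofReal (2001 / 1000 / s) :=
        setLIntegral_mono measurable_const fun r hr => ENNReal.ofReal_le_ofReal hr.2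
    _ = ENNReal.ofReal (2001 / 1000 / s * (2001 / 1000 / s - 999 / 1000 / s)) := by
        rw [setLIntegral_const, radialSupport, Real.volume_Icc,
          ← ENNReal.ofReal_mul (by positivity)]
    _ ≤ _ := by
        apply ENNReal.ofReal_le_ofReal
        rw [div_sub_div_same, div_mul_div_comm, ← sq]
        gcongr
        norm_num

/-- Mixed-norm bound for functions dominated by a radial factor times slab norms of `g`. -/
lemma eLpNorm_le_of_slab_bound {s : ℝ} (hs : 0 < s) {g : ℝ × ℝ → ℂ} (hg : AEStronglyMeasurable g)
    {p q : ℝ≥0∞} (hp : 1 ≤ p) (hpq : p ≤ q) (F : ℝ × ℝ → ℝ) (A : ℝ≥0∞)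
    (hF : ∀ z, ‖F z‖ₑ ≤
      (radialSupport s).indicator (fun r => ENNReal.ofReal (r ^ (1 / q).toReal)) z.1
        * (A * eLpNorm g p (slabMeasure s z.2))) :
    eLpNorm F q volume ≤
      A * ENNReal.ofReal 36 ^ (1 / p).toReal * ENNReal.ofReal (5 * π) ^ (1 / q).toReal
      * ENNReal.ofReal s ^ (2 * (1 / p).toReal - 3 * (1 / q).toReal) * eLpNorm g p volume := by
  have hσ0 : ENNReal.ofReal s ≠ 0 := by positivity
  have hσt : ENNReal.ofReal s ≠ ∞ := ENNReal.ofReal_ne_top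
  set N := eLpNorm g p volume
  set σ := ENNReal.ofReal s with hσ
  have hpow : ∀ e : ℝ, 0 ≤ e → ENNReal.ofReal (36 * s ^ 2) ^ e =
      ENNReal.ofReal 36 ^ e * σ ^ (2 * e) := by
    intro e he
    rw [ENNReal.ofReal_mul (by norm_num), ENNReal.mul_rpow_of_nonneg _ _ he,
      ENNReal.ofReal_pow hs.le, ENNReal.rpow_mul, ENNReal.rpow_ofNat]
  have hsup : ∀ x, eLpNorm g p (slabMeasure s x) ≤
      ENNReal.ofReal 36 ^ (1 / p).toReal * σ ^ (2 * (1 / p).toReal) * N := by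
    intro x
    rw [← hpow _ ENNReal.toReal_nonneg]
    exact eLpNorm_slabMeasure_le hs g p x
  rcases eq_or_ne q ∞ with rfl | hq
  · rw [eLpNorm_exponent_top]
    refine eLpNormEssSup_le_of_ae_enorm_bound (.of_forall fun z => (hF z).trans ?_)
    have h1 : (radialSupport s).indicator
        (fun r => ENNReal.ofReal (r ^ (1 / (∞ : ℝ≥0∞)).toReal)) z.1 ≤ 1 := by
      by_cases hz : z.1 ∈ radialSupport s <;> simp [hz]
    calc _ ≤ 1 * (A * (ENNReal.ofReal 36 ^ (1 / p).toReal * σ ^ (2 * (1 / p).toReal) * N)) := by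
          gcongr
          exact hsup _
      _ = _ := by
          simp
          ring
  have hp0 : p ≠ 0 := (zero_lt_one.trans_le hp).ne'
  have hpt : p ≠ ∞ := (hpq.trans_lt hq.lt_top).ne
  have hq0 : q ≠ 0 := (zero_lt_one.trans_le (hp.trans hpq)).ne'
  have hP : 0 < p.toReal := ENNReal.toReal_pos hp0 hpt
  have hQ : 0 < q.toReal := ENNReal.toReal_pos hq0 hq
  have hPQ : p.toReal ≤ q.toReal := ENNReal.toReal_mono hq hpq
  have hp1 : (1 / p).toReal = 1 / p.toReal := by simp
  have hq1 : (1 / q).toReal = 1 / q.toReal := by simp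
  rw [hp1, hq1]
  rw [hp1] at hsup
  rw [hq1] at hF
  set P := p.toReal
  set Q := q.toReal
  set S := ENNReal.ofReal 36 ^ (1 / P) * σ ^ (2 * (1 / P)) * N with hS
  set B : ℝ → ℝ≥0∞ := fun x => eLpNorm g p (slabMeasure s x) with hB
  have hBm : AEMeasurable (fun x => B x ^ P) := by
    simp only [hB, eLpNorm_slabMeasure_rpow hg hp0 hpt, P]
    exact (aemeasurable_slab_integrand s hg _).lintegral_prod_right'
  have hBQ : ∀ x, B x ^ Q ≤ S ^ (Q - P) * B x ^ P := by
    intro x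
    have : B x ^ Q = B x ^ (Q - P) * B x ^ P := by
      rw [← ENNReal.rpow_add_of_nonneg _ _ (by linarith) hP.le, sub_add_cancel]
    rw [this]
    gcongr
    exact hsup x
  have hpt' : ∀ z, ‖F z‖ₑ ^ Q ≤ (radialSupport s).indicator (fun r => ENNReal.ofReal r) z.1 *
      (A ^ Q * S ^ (Q - P) * B z.2 ^ P) := by
    intro z
    calc ‖F z‖ₑ ^ Q ≤ ((radialSupport s).indicator
          (fun r => ENNReal.ofReal (r ^ (1 / Q))) z.1 * (A * B z.2)) ^ Q := by
          gcongr
          exact hF z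
      _ = (radialSupport s).indicator (fun r => ENNReal.ofReal r) z.1 * (A ^ Q * B z.2 ^ Q) := by
          rw [ENNReal.mul_rpow_of_nonneg _ _ hQ.le, ENNReal.mul_rpow_of_nonneg _ _ hQ.le]
          congr 1
          by_cases hz : z.1 ∈ radialSupport s
          · have hz0 : 0 ≤ z.1 := le_trans (by positivity) hz.1
            rw [indicator_of_mem hz, indicator_of_mem hz,
              ENNReal.ofReal_rpow_of_nonneg (by positivity) hQ.le, ← Real.rpow_mul hz0,
              one_div_mul_cancel hQ.ne', Real.rpow_one]
          · rw [indicator_of_notMem hz, indicator_of_notMem hz, ENNReal.zero_rpow_of_pos hQ]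
      _ ≤ _ := by
          rw [mul_assoc]
          gcongr
          exact hBQ _
  have hint : ∫⁻ z, ‖F z‖ₑ ^ Q ≤ ENNReal.ofReal (5 / s ^ 2) *
      (A ^ Q * S ^ (Q - P) * (ENNReal.ofReal (36 * π * s) * N ^ P)) := by
    calc ∫⁻ z, ‖F z‖ₑ ^ Q
        ≤ ∫⁻ z : ℝ × ℝ, (radialSupport s).indicator (fun r => ENNReal.ofReal r) z.1 *
          (A ^ Q * S ^ (Q - P) * B z.2 ^ P) := lintegral_mono hpt'
      _ = (∫⁻ r in radialSupport s, ENNReal.ofReal r) *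
          (A ^ Q * S ^ (Q - P) * ∫⁻ x, B x ^ P) := by
          rw [Measure.volume_eq_prod, lintegral_prod_mul
            (f := (radialSupport s).indicator (fun r => ENNReal.ofReal r))
            (g := fun x => A ^ Q * S ^ (Q - P) * B x ^ P)
            (ENNReal.measurable_ofReal.indicator measurableSet_Icc).aemeasurable
            (hBm.const_mul _), lintegral_const_mul'' _ hBm]
          congr 1
          exact lintegral_indicator measurableSet_Icc _
      _ ≤ _ := by
          rw [lintegral_eLpNorm_slabMeasure hs hg hp0 hpt]
          gcongr
          exact lintegral_ofReal_radialSupport_le hs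
  rw [eLpNorm_eq_lintegral_rpow_enorm_toReal hq0 hq]
  refine (ENNReal.rpow_le_rpow hint (by positivity)).trans_eq ?_
  have e1 : ENNReal.ofReal (5 / s ^ 2) * ENNReal.ofReal (36 * π * s) =
      ENNReal.ofReal 36 * ENNReal.ofReal (5 * π) * σ ^ (-1 : ℝ) := by
    rw [hσ, ENNReal.ofReal_rpow_of_pos hs, ← ENNReal.ofReal_mul (by positivity),
      ← ENNReal.ofReal_mul (by positivity), ← ENNReal.ofReal_mul (by positivity), Real.rpow_neg_one]
    congr 1
    field_simp
  have e2 : S ^ (Q - P) * (ENNReal.ofReal 36 * σ ^ (2:ℝ) * N ^ P) = S ^ Q := by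
    have : ENNReal.ofReal 36 * σ ^ (2:ℝ) * N ^ P = S ^ P := by
      rw [hS, ENNReal.mul_rpow_of_nonneg _ _ hP.le, ENNReal.mul_rpow_of_nonneg _ _ hP.le,
        ← ENNReal.rpow_mul, ← ENNReal.rpow_mul, mul_assoc 2, one_div_mul_cancel hP.ne',
        ENNReal.rpow_one, mul_one]
    rw [this, ← ENNReal.rpow_add_of_nonneg _ _ (by linarith) hP.le, sub_add_cancel]
  have e3 : σ ^ (-1 : ℝ) = σ ^ (2 : ℝ) * σ ^ (-3 : ℝ) := by
    rw [← ENNReal.rpow_add _ _ hσ0 hσt]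
    norm_num
  calc _ = (A ^ Q * (S ^ (Q - P) * (ENNReal.ofReal 36 * σ ^ (2:ℝ) * N ^ P)) *
        (ENNReal.ofReal (5 * π) * σ ^ (-3 : ℝ))) ^ (1 / Q) := by
        congr 1
        calc _ = A ^ Q * S ^ (Q - P) * N ^ P *
              (ENNReal.ofReal (5 / s ^ 2) * ENNReal.ofReal (36 * π * s)) := by ring
          _ = _ := by
              rw [e1, e3]
              ring
    _ = A * S * (ENNReal.ofReal (5 * π) ^ (1 / Q) * σ ^ (-3 * (1 / Q))) := by
        have hQ' : 0 ≤ 1 / Q := by positivity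
        rw [e2, ENNReal.mul_rpow_of_nonneg _ _ hQ', ENNReal.mul_rpow_of_nonneg _ _ hQ',
          ENNReal.mul_rpow_of_nonneg _ _ hQ', ← ENNReal.rpow_mul, ← ENNReal.rpow_mul,
          ← ENNReal.rpow_mul, mul_one_div_cancel hQ.ne', ENNReal.rpow_one, ENNReal.rpow_one]
    _ = _ := by
        rw [hS, sub_eq_add_neg, ENNReal.rpow_add _ _ hσ0 hσt, neg_mul]
        ring

/-! ### The maximal estimate -/

lemma Aop_projLt_of_not_integrable (φ : ℝ → ℝ) (l : ℤ) {g : ℝ × ℝ → ℂ} (hg : ¬ Integrable g)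
    (t r x₃ : ℝ) : Aop (projLt φ l g) t r x₃ = 0 := by
  have h1 : ∀ ξ, ft2 g ξ = 0 := by
    intro ξ
    rw [ft2_eq]
    refine integral_undef fun h => hg ?_
    refine (integrable_plane_mul h (u := fun y => y) (v := fun _ => ξ) (by fun_prop)
      (by fun_prop)).congr (.of_forall fun y => ?_)
    simp only
    rw [← mul_assoc, ← plane_add]
    simp [plane]
  have h2 : projLt φ l g = 0 := by
    ext x
    simp [projLt, h1]
  simp [Aop, h2, ft2]

lemma enorm_biSup_norm_le {ι E : Type*} [NormedAddCommGroup E] (S : Set ι) (f : ι → E) {B : ℝ≥0∞}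
    (h : ∀ t ∈ S, ‖f t‖ₑ ≤ B) : ‖⨆ t ∈ S, ‖f t‖‖ₑ ≤ B := by
  rcases eq_or_ne B ∞ with rfl | hB
  · exact le_top
  have h1 : ⨆ t ∈ S, ‖f t‖ ≤ B.toReal := by
    refine Real.iSup_le (fun t => Real.iSup_le (fun ht => ?_) ENNReal.toReal_nonneg)
      ENNReal.toReal_nonneg
    rw [← toReal_enorm]
    exact ENNReal.toReal_mono hB (h t ht)
  have h0 : 0 ≤ ⨆ t ∈ S, ‖f t‖ :=
    Real.iSup_nonneg fun t => Real.iSup_nonneg fun _ => norm_nonneg _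
  rw [Real.enorm_of_nonneg h0]
  exact ENNReal.ofReal_le_of_le_toReal h1

lemma enorm_average_le {C s : ℝ} (hC : 0 < C) (hs : 0 < s) {K g : ℝ × ℝ → ℂ}
    (hg : AEStronglyMeasurable g)
    (hK : ∀ x, ‖K x‖ ≤ C * s ^ 2 * (cauchyWeight (s * x.1) * cauchyWeight (s * x.2)))
    {p : ℝ≥0∞} (hp : 1 ≤ p) {a : ℝ → ℝ → ℝ → ℂ}
    (ha : ∀ t r x₃, a t r x₃ = ∫ θ in Ioc (0:ℝ) (2 * π),
      ∫ y, K (((r ^ 2 + t ^ 2) / 2, x₃) - (t * r) • (Real.cos θ, Real.sin θ) - y) * g y)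
    (r : ℝ) (hr : r ∈ radialSupport s) (t : ℝ) (ht : t ∈ Ioo (1:ℝ) 2) (x₃ : ℝ) :
    ‖a t r x₃‖ₑ ≤ ENNReal.ofReal (2 * π) *
      (ENNReal.ofReal C * ENNReal.ofReal (π ^ 2) ^ (1 - 1 / p.toReal)) *
        eLpNorm g p (slabMeasure s x₃) := by
  rw [ha]
  refine (enorm_integral_le_lintegral_enorm _).trans ?_
  calc _ ≤ ∫⁻ θ in Ioc (0:ℝ) (2 * π), (ENNReal.ofReal C *
        ENNReal.ofReal (π ^ 2) ^ (1 - 1 / p.toReal)) * eLpNorm g p (slabMeasure s x₃) := by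
        refine lintegral_mono fun θ => (enorm_integral_le_lintegral_enorm _).trans ?_
        simp only [enorm_mul]
        refine lintegral_kernel_mul_le hC hs hg hK hp _ x₃ ?_
        have hr0 : 0 ≤ r := le_trans (by positivity) hr.1
        have hsr : s * r ≤ 2001 / 1000 := by
          rw [mul_comm]
          exact (le_div_iff₀ hs).1 hr.2
        have ht0 : 0 < t := zero_lt_one.trans ht.1
        have h1 : s * ((((r ^ 2 + t ^ 2) / 2, x₃) - (t * r) • (Real.cos θ, Real.sin θ)).2 - x₃) =
            -(t * (s * r) * Real.sin θ) := by
          simp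
          ring
        rw [h1, abs_neg, abs_mul, abs_of_nonneg (by positivity)]
        calc t * (s * r) * |Real.sin θ| ≤ 2 * (2001 / 1000) * 1 := by
              gcongr
              · exact ht.2.le
              · exact Real.abs_sin_le_one θ
          _ ≤ 4.1 := by norm_num
    _ = _ := by
        rw [setLIntegral_const, Real.volume_Ioc, sub_zero]
        ring

lemma enorm_maximal_le {φ : ℝ → ℝ} (hφ : IsLPBump φ) {s : ℝ} (hs : 0 < s) {q : ℝ≥0∞}
    {a : ℝ → ℝ → ℝ → ℂ} {A : ℝ≥0∞} {B : ℝ → ℝ≥0∞}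
    (ha : ∀ r ∈ radialSupport s, ∀ t ∈ Ioo (1:ℝ) 2, ∀ x₃, ‖a t r x₃‖ₑ ≤ A * B x₃) (z : ℝ × ℝ) :
    ‖z.1 ^ (1 / q).toReal * ⨆ t ∈ Ioo (1:ℝ) 2, ‖((φ (s * z.1) : ℝ) : ℂ) * a t z.1 z.2‖‖ₑ ≤
      (radialSupport s).indicator (fun r => ENNReal.ofReal (r ^ (1 / q).toReal)) z.1 *
        (A * B z.2) := by
  by_cases hz : z.1 ∈ radialSupport s
  · have hz0 : 0 ≤ z.1 := le_trans (by positivity) hz.1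
    rw [indicator_of_mem hz, enorm_mul, Real.enorm_of_nonneg (by positivity)]
    gcongr
    refine enorm_biSup_norm_le _ _ fun t ht => ?_
    rw [enorm_mul]
    calc _ ≤ 1 * (A * B z.2) := by
          gcongr
          · rw [← ofReal_norm, Complex.norm_real, Real.norm_of_nonneg (hφ.2.1 _)]
            exact ENNReal.ofReal_le_one.2 (hφ.le_one _)
          · exact ha _ hz _ ht _
      _ = _ := one_mul _
  · have h0 : φ (s * z.1) = 0 := by
      by_contra h
      refine hz ⟨?_, ?_⟩
      · rw [div_le_iff₀ hs, mul_comm]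
        exact not_lt.1 fun h' => h (hφ.eq_zero_of_lt h')
      · rw [le_div_iff₀ hs, mul_comm]
        exact not_lt.1 fun h' => h (hφ.eq_zero_of_gt h')
    simp [h0]

/-- The estimate (2.7) of the paper: for `k ≤ −2` and `1 ≤ p ≤ q ≤ ∞`,
`‖r^{1/q} sup_{1<t<2} |φ_k(r) 𝒜_t 𝒫_{<−k} g|‖_{L^q_{r,x₃}} ≲ 2^{3k/q − 2k/p} ‖g‖_{L^p}`
with constant independent of `k, g`. -/
theorem Aop_low_freq_small_radius
    (φ : ℝ → ℝ) (hφ : IsLPBump φ) (p q : ℝ≥0∞) (hp : 1 ≤ p) (hpq : p ≤ q) :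
    ∃ C : ℝ, 0 < C ∧ ∀ k : ℤ, k ≤ -2 → ∀ g : ℝ × ℝ → ℂ,
      eLpNorm (fun z : ℝ × ℝ => z.1 ^ (1/q).toReal *
          ⨆ t ∈ Set.Ioo (1:ℝ) 2,
            ‖((φ ((2:ℝ) ^ (-k) * z.1) : ℝ) : ℂ) * Aop (projLt φ (-k) g) t z.1 z.2‖)
          q volume ≤
        ENNReal.ofReal (C * (2:ℝ) ^
            (3 * (k:ℝ) * (1/q).toReal - 2 * (k:ℝ) * (1/p).toReal)) *
          eLpNorm g p volume := by
  obtain ⟨C, hC, hker⟩ := exists_scaled_kernel hφ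
  set A : ℝ≥0∞ := ENNReal.ofReal (2 * π) *
    (ENNReal.ofReal C * ENNReal.ofReal (π ^ 2) ^ (1 - 1 / p.toReal))
  set E : ℝ≥0∞ := A * ENNReal.ofReal 36 ^ (1 / p).toReal *
    ENNReal.ofReal (5 * π) ^ (1 / q).toReal
  have hAt : A ≠ ∞ := by
    have h1 : ENNReal.ofReal (π ^ 2) ^ (1 - 1 / p.toReal) ≠ ∞ :=
      ENNReal.rpow_ne_top_of_ne_zero (by positivity) ENNReal.ofReal_ne_top
    finiteness
  have hEt : E ≠ ∞ := by
    have h1 := ENNReal.rpow_ne_top_of_nonneg (y := (1 / p).toReal) ENNReal.toReal_nonneg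
      (ENNReal.ofReal_ne_top (r := 36))
    have h2 := ENNReal.rpow_ne_top_of_nonneg (y := (1 / q).toReal) ENNReal.toReal_nonneg
      (ENNReal.ofReal_ne_top (r := 5 * π))
    finiteness
  refine ⟨E.toReal + 1, by positivity, fun k _ g => ?_⟩
  by_cases hg : Integrable g
  swap
  · simp [Aop_projLt_of_not_integrable φ (-k) hg]
  have hs : (0:ℝ) < 2 ^ (-k) := by positivity
  obtain ⟨K, hK, hm, hKb, hinv, hft⟩ := hker _ hs
  rw [← zpow_neg] at hm hinv hft
  have hrep := Aop_projLt_eq hφ (l := -k) hg hK hm hinv hft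
  have hF := eLpNorm_le_of_slab_bound hs hg.1 hp hpq _ A
    (enorm_maximal_le hφ hs (q := q) (enorm_average_le hC hs hg.1 hKb hp hrep))
  refine hF.trans ?_
  have hpow : ENNReal.ofReal ((2:ℝ) ^ (-k)) ^ (2 * (1 / p).toReal - 3 * (1 / q).toReal) =
      ENNReal.ofReal ((2:ℝ) ^ (3 * (k:ℝ) * (1/q).toReal - 2 * (k:ℝ) * (1/p).toReal)) := by
    rw [ENNReal.ofReal_rpow_of_pos hs, ← Real.rpow_intCast, ← Real.rpow_mul zero_le_two]
    congr 2
    push_cast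
    ring
  rw [hpow, ENNReal.ofReal_mul (show 0 ≤ E.toReal + 1 by positivity)]
  gcongr ?_ * _ * _
  exact (ENNReal.le_ofReal_iff_toReal_le hEt (by positivity)).2 (by linarith)

end
end

section
/- Let l, m ≥ 0 be integers and let D_l = {(x₁,x₂,t) ∈ ℝ²×ℝ : 2^{−2l} ≤ |x₁ − t| ≤ 2^{−2l+1}}. Then there is a constant C (independent of l, m, g) such that ‖ ∫_{ℝ²} e^{i(x·ξ + t|ξ|)} ĝ(ξ) ψ_m(ξ) dξ ‖_{L²(D_l, dx dt)} ≤ C · 2^{m/2 − l} ‖g‖_{L²(ℝ²)}. -/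
open MeasureTheory Real Set
open scoped ENNReal

noncomputable section

/-- The angular cutoff `ψ_m(ξ) = φ(2^m |ξ₁/|ξ| + 1|)`. -/
def psiA (φ : ℝ → ℝ) (m : ℤ) (ξ : ℝ × ℝ) : ℝ :=
  φ ((2:ℝ) ^ m * |ξ.1 / enorm2 ξ + 1|)

/-- The oscillatory integral `∫ e^{i⟨u, P x⟩} F(x) dμ(x)` with phase map `P : X → ℝ²`. -/
def oscInt {X : Type*} [MeasurableSpace X] (μ : Measure X) (P : X → ℝ × ℝ) (F : X → ℂ)
    (u : ℝ × ℝ) : ℂ :=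
  ∫ x, Complex.exp (Complex.I * ((u.1 * (P x).1 + u.2 * (P x).2 : ℝ) : ℂ)) * F x ∂μ

lemma norm_cexp_I_mul (r : ℝ) : ‖Complex.exp (Complex.I * (r : ℂ))‖ = 1 := by
  rw [mul_comm]; exact Complex.norm_exp_ofReal_mul_I r

lemma continuous_oscInt {X : Type*} [MeasurableSpace X] {μ : Measure X} {P : X → ℝ × ℝ}
    {F : X → ℂ} (hP : Measurable P) (hF : Integrable F μ) : Continuous (oscInt μ P F) := by
  refine continuous_of_dominated (bound := fun x => ‖F x‖) (fun u => ?_) (fun u => ?_) hF.norm ?_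
  · exact (Measurable.aestronglyMeasurable (by fun_prop)).mul hF.1
  · exact Filter.Eventually.of_forall fun x => by rw [norm_mul, norm_cexp_I_mul, one_mul]
  · exact Filter.Eventually.of_forall fun x => by fun_prop

/-- The Gaussian `e^{-ε|u|²}` on `ℝ²`. -/
def gauss (ε : ℝ) (u : ℝ × ℝ) : ℝ := Real.exp (-ε * u.1 ^ 2) * Real.exp (-ε * u.2 ^ 2)

lemma continuous_gauss (ε : ℝ) : Continuous (gauss ε) := by unfold gauss; fun_prop

lemma gauss_nonneg (ε : ℝ) (u : ℝ × ℝ) : 0 ≤ gauss ε u := by unfold gauss; positivity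

lemma gauss_sub_comm (ε : ℝ) (u v : ℝ × ℝ) : gauss ε (u - v) = gauss ε (v - u) := by
  simp only [gauss, Prod.fst_sub, Prod.snd_sub]
  congr 3 <;> ring

lemma integrable_gauss {ε : ℝ} (hε : 0 < ε) : Integrable (gauss ε) :=
  (integrable_exp_neg_mul_sq hε).mul_prod (integrable_exp_neg_mul_sq hε)

lemma integral_gauss {ε : ℝ} (hε : 0 < ε) : ∫ u, gauss ε u = π / ε := by
  have h := integral_prod_mul (μ := (volume : Measure ℝ)) (ν := (volume : Measure ℝ))
    (fun x : ℝ => Real.exp (-ε * x ^ 2)) (fun x : ℝ => Real.exp (-ε * x ^ 2))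
  rw [integral_gaussian, Real.mul_self_sqrt (by positivity)] at h
  exact h

lemma lintegral_gauss {ε : ℝ} (hε : 0 < ε) :
    ∫⁻ u, ENNReal.ofReal (gauss ε u) = ENNReal.ofReal (π / ε) := by
  rw [← ofReal_integral_eq_lintegral_ofReal (integrable_gauss hε)
    (Filter.Eventually.of_forall (gauss_nonneg ε)), integral_gauss hε]

lemma fourier_gauss {ε : ℝ} (hε : 0 < ε) (w : ℝ × ℝ) :
    ∫ u : ℝ × ℝ, Complex.exp (Complex.I * ((u.1 * w.1 + u.2 * w.2 : ℝ) : ℂ)) * (gauss ε u : ℂ)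
      = ((π / ε * gauss (1 / (4 * ε)) w : ℝ) : ℂ) := by
  have h1 (t : ℝ) := fourierIntegral_gaussian (b := (ε : ℂ)) (by simpa using hε) (t : ℂ)
  have h := integral_prod_mul (μ := (volume : Measure ℝ)) (ν := (volume : Measure ℝ))
    (fun x : ℝ => Complex.exp (Complex.I * (w.1 : ℂ) * x) * Complex.exp (-(ε : ℂ) * x ^ 2))
    (fun x : ℝ => Complex.exp (Complex.I * (w.2 : ℂ) * x) * Complex.exp (-(ε : ℂ) * x ^ 2))
  rw [h1, h1] at h
  have h2 : ((π : ℂ) / ε) ^ (1 / 2 : ℂ) * ((π : ℂ) / ε) ^ (1 / 2 : ℂ) = π / ε := by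
    rw [← Complex.cpow_add _ _ (by
      have := hε.ne'; have := Real.pi_ne_zero; exact_mod_cast div_ne_zero this hε.ne')]
    norm_num
  rw [mul_mul_mul_comm, h2] at h
  rw [Measure.volume_eq_prod]
  convert h using 1
  · congr 1; ext u
    simp only [gauss]
    push_cast
    rw [mul_mul_mul_comm]
    congr 1
    rw [← Complex.exp_add]
    congr 1; ring
  · simp only [gauss]
    push_cast
    have : (ε : ℂ) ≠ 0 := by exact_mod_cast hε.ne'
    congr 3 <;> field_simp

lemma ENNReal.mul_le_half_sq_add_sq (a b : ℝ≥0∞) : a * b ≤ 2⁻¹ * (a ^ 2 + b ^ 2) := by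
  rcases eq_or_ne a ⊤ with rfl | ha
  · simp
  rcases eq_or_ne b ⊤ with rfl | hb
  · simp
  lift a to NNReal using ha
  lift b to NNReal using hb
  have h : a * b ≤ 2⁻¹ * (a ^ 2 + b ^ 2) := by
    rw [← NNReal.coe_le_coe]
    push_cast
    nlinarith [sq_nonneg ((a : ℝ) - b)]
  rw [← ENNReal.coe_two, ← ENNReal.coe_inv two_ne_zero]
  exact_mod_cast h

section OscInt

variable {X : Type*} [MeasurableSpace X] {μ : Measure X} {P : X → ℝ × ℝ}
  {F : X → ℂ} {A : ℝ≥0∞}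

lemma lintegral_gauss_sub_le (hP : Measurable P) (hA : μ.map P ≤ A • volume) {δ : ℝ} (hδ : 0 < δ)
    (w : ℝ × ℝ) : ∫⁻ y, ENNReal.ofReal (gauss δ (w - P y)) ∂μ ≤ A * ENNReal.ofReal (π / δ) := by
  have hm : Measurable fun v => ENNReal.ofReal (gauss δ (w - v)) := by
    have := (continuous_gauss δ).measurable
    fun_prop
  calc ∫⁻ y, ENNReal.ofReal (gauss δ (w - P y)) ∂μ
      = ∫⁻ v, ENNReal.ofReal (gauss δ (w - v)) ∂(μ.map P) := (lintegral_map hm hP).symm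
    _ ≤ ∫⁻ v, ENNReal.ofReal (gauss δ (w - v)) ∂(A • volume) := lintegral_mono' hA le_rfl
    _ = A * ENNReal.ofReal (π / δ) := by
      rw [lintegral_smul_measure, lintegral_sub_left_eq_self (fun v => ENNReal.ofReal (gauss δ v)),
        lintegral_gauss hδ, smul_eq_mul]

variable [SFinite μ]

lemma lintegral_kernel_le (hP : Measurable P) (hA : μ.map P ≤ A • volume) {δ : ℝ} (hδ : 0 < δ)
    (hFm : Measurable F) :
    ∫⁻ p : X × X, ENNReal.ofReal (gauss δ (P p.1 - P p.2)) * (‖F p.1‖ₑ * ‖F p.2‖ₑ) ∂(μ.prod μ) ≤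
      A * ENNReal.ofReal (π / δ) * ∫⁻ x, ‖F x‖ₑ ^ 2 ∂μ := by
  have hg := (continuous_gauss δ).measurable
  have key : ∫⁻ p : X × X, ENNReal.ofReal (gauss δ (P p.1 - P p.2)) * ‖F p.1‖ₑ ^ 2 ∂(μ.prod μ) ≤
      A * ENNReal.ofReal (π / δ) * ∫⁻ x, ‖F x‖ₑ ^ 2 ∂μ := by
    rw [lintegral_prod _ (Measurable.aemeasurable (by fun_prop)),
      ← lintegral_const_mul _ (by fun_prop)]
    refine lintegral_mono fun x => ?_
    dsimp only
    rw [lintegral_mul_const _ (by fun_prop)]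
    gcongr
    exact lintegral_gauss_sub_le hP hA hδ _
  have key' : ∫⁻ p : X × X, ENNReal.ofReal (gauss δ (P p.1 - P p.2)) * ‖F p.2‖ₑ ^ 2 ∂(μ.prod μ) ≤
      A * ENNReal.ofReal (π / δ) * ∫⁻ x, ‖F x‖ₑ ^ 2 ∂μ := by
    refine le_trans (le_of_eq ?_) key
    rw [← lintegral_prod_swap]
    simp only [Prod.fst_swap, Prod.snd_swap]
    simp_rw [gauss_sub_comm δ (P _) (P _)]
  calc _ ≤ ∫⁻ p : X × X, 2⁻¹ * (ENNReal.ofReal (gauss δ (P p.1 - P p.2)) * ‖F p.1‖ₑ ^ 2 +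
        ENNReal.ofReal (gauss δ (P p.1 - P p.2)) * ‖F p.2‖ₑ ^ 2) ∂(μ.prod μ) := by
        refine lintegral_mono fun p => ?_
        rw [← mul_add, mul_left_comm 2⁻¹]
        exact mul_le_mul_right (ENNReal.mul_le_half_sq_add_sq _ _) _
    _ ≤ 2⁻¹ * (A * ENNReal.ofReal (π / δ) * ∫⁻ x, ‖F x‖ₑ ^ 2 ∂μ +
        A * ENNReal.ofReal (π / δ) * ∫⁻ x, ‖F x‖ₑ ^ 2 ∂μ) := by
        rw [lintegral_const_mul _ (by fun_prop), lintegral_add_left (by fun_prop)]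
        gcongr
    _ = _ := by
        rw [← two_mul, ← mul_assoc, ENNReal.inv_mul_cancel two_ne_zero ENNReal.ofNat_ne_top,
          one_mul]

lemma ofReal_integral_gauss_mul_oscInt {ε : ℝ} (hε : 0 < ε) (hP : Measurable P)
    (hF : Integrable F μ) :
    ((∫ u, gauss ε u * ‖oscInt μ P F u‖ ^ 2 : ℝ) : ℂ) =
      ∫ p : X × X, ((π / ε * gauss (1 / (4 * ε)) (P p.1 - P p.2) : ℝ) : ℂ) *
        (F p.1 * star (F p.2)) ∂(μ.prod μ) := by
  have hs : Integrable (fun x => star (F x)) μ :=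
    (LinearIsometryEquiv.integrable_comp_iff Complex.conjLIE).2 hF
  have hFF : Integrable (fun p : X × X => F p.1 * star (F p.2)) (μ.prod μ) := hF.mul_prod hs
  let J : ℝ × ℝ → X × X → ℂ := fun u p =>
    Complex.exp (Complex.I * ((u.1 * (P p.1 - P p.2).1 + u.2 * (P p.1 - P p.2).2 : ℝ) : ℂ)) *
      ((gauss ε u : ℂ) * (F p.1 * star (F p.2)))
  have hJ : Integrable (Function.uncurry J) ((volume : Measure (ℝ × ℝ)).prod (μ.prod μ)) := by
    refine ((integrable_gauss hε).ofReal.mul_prod hFF).bdd_mul (c := 1) ?_ ?_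
    · exact Measurable.aestronglyMeasurable (by fun_prop)
    · exact Filter.Eventually.of_forall fun x => (norm_cexp_I_mul _).le
  rw [← integral_complex_ofReal]
  calc ∫ u, ((gauss ε u * ‖oscInt μ P F u‖ ^ 2 : ℝ) : ℂ)
      = ∫ u, ∫ p, J u p ∂(μ.prod μ) := by
        congr 1; ext u
        have h := integral_prod_mul (μ := μ) (ν := μ)
          (fun x => Complex.exp (Complex.I * ((u.1 * (P x).1 + u.2 * (P x).2 : ℝ) : ℂ)) * F x)
          (fun x => star
            (Complex.exp (Complex.I * ((u.1 * (P x).1 + u.2 * (P x).2 : ℝ) : ℂ)) * F x))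
        have h2 : ∫ x, star
            (Complex.exp (Complex.I * ((u.1 * (P x).1 + u.2 * (P x).2 : ℝ) : ℂ)) * F x) ∂μ
            = star (oscInt μ P F u) := integral_conj
        rw [h2] at h
        push_cast
        rw [← Complex.mul_conj' (oscInt μ P F u)]
        refine Eq.trans (congrArg _ h.symm) ?_
        rw [← integral_const_mul]
        congr 1; ext p
        simp only [J, star_mul', Complex.star_def, ← Complex.exp_conj, map_mul, Complex.conj_I,
          Complex.conj_ofReal]
        rw [mul_mul_mul_comm, ← Complex.exp_add]
        rw [mul_left_comm]
        congr 2
        push_cast [Prod.fst_sub, Prod.snd_sub]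
        ring
    _ = ∫ p, (∫ u, J u p) ∂(μ.prod μ) := integral_integral_swap hJ
    _ = _ := by
        congr 1; ext p
        simp only [J, ← mul_assoc]
        simp only [mul_assoc _ (F p.1)]
        rw [integral_mul_const, fourier_gauss hε]

lemma lintegral_gauss_mul_oscInt_le {ε : ℝ} (hε : 0 < ε) (hP : Measurable P)
    (hF : Integrable F μ) (hFm : Measurable F) (hA : μ.map P ≤ A • volume) :
    ∫⁻ u, ENNReal.ofReal (gauss ε u) * ‖oscInt μ P F u‖ₑ ^ 2 ≤
      ENNReal.ofReal ((2 * π) ^ 2) * A * ∫⁻ x, ‖F x‖ₑ ^ 2 ∂μ := by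
  have hcont := continuous_oscInt hP hF
  have hbd (u : ℝ × ℝ) : ‖oscInt μ P F u‖ ≤ ∫ x, ‖F x‖ ∂μ := by
    refine (norm_integral_le_integral_norm _).trans (le_of_eq ?_)
    simp only [norm_mul, norm_cexp_I_mul, one_mul]
  have hint : Integrable fun u => gauss ε u * ‖oscInt μ P F u‖ ^ 2 := by
    refine (integrable_gauss hε).mul_bdd (c := (∫ x, ‖F x‖ ∂μ) ^ 2)
      (by fun_prop) (Filter.Eventually.of_forall fun u => ?_)
    rw [norm_pow, norm_norm]
    gcongr
    exact hbd u
  have h0 : ∫⁻ u, ENNReal.ofReal (gauss ε u) * ‖oscInt μ P F u‖ₑ ^ 2 =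
      ENNReal.ofReal (∫ u, gauss ε u * ‖oscInt μ P F u‖ ^ 2) := by
    rw [ofReal_integral_eq_lintegral_ofReal hint
      (Filter.Eventually.of_forall fun u => mul_nonneg (gauss_nonneg ε u) (by positivity))]
    congr 1; ext u
    rw [ENNReal.ofReal_mul (gauss_nonneg ε u), ENNReal.ofReal_pow (norm_nonneg _), ofReal_norm]
  have h1 : ENNReal.ofReal (∫ u, gauss ε u * ‖oscInt μ P F u‖ ^ 2) ≤
      ‖((∫ u, gauss ε u * ‖oscInt μ P F u‖ ^ 2 : ℝ) : ℂ)‖ₑ := by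
    rw [← ofReal_norm, Complex.norm_real]
    exact ENNReal.ofReal_le_ofReal (le_abs_self _)
  rw [h0]
  refine h1.trans ?_
  rw [ofReal_integral_gauss_mul_oscInt hε hP hF]
  refine (enorm_integral_le_lintegral_enorm _).trans ?_
  have hδ : 0 < 1 / (4 * ε) := by positivity
  have hstar (z : ℂ) : ‖star z‖ₑ = ‖z‖ₑ := by rw [← ofReal_norm, norm_star, ofReal_norm]
  have h2 (p : X × X) : ‖((π / ε * gauss (1 / (4 * ε)) (P p.1 - P p.2) : ℝ) : ℂ) *
        (F p.1 * star (F p.2))‖ₑ = ENNReal.ofReal (π / ε) *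
        (ENNReal.ofReal (gauss (1 / (4 * ε)) (P p.1 - P p.2)) * (‖F p.1‖ₑ * ‖F p.2‖ₑ)) := by
    rw [enorm_mul, enorm_mul (F p.1), hstar, ← ofReal_norm (Complex.ofReal _),
      Complex.norm_real, Real.norm_of_nonneg (mul_nonneg (by positivity) (gauss_nonneg _ _)),
      ENNReal.ofReal_mul (by positivity), mul_assoc]
  simp_rw [h2]
  have hg := (continuous_gauss (1 / (4 * ε))).measurable
  rw [lintegral_const_mul _ (by fun_prop)]
  refine (mul_le_mul_right (lintegral_kernel_le hP hA hδ hFm) _).trans (le_of_eq ?_)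
  rw [← mul_assoc, ← mul_assoc, mul_right_comm (ENNReal.ofReal (π / ε)), ← ENNReal.ofReal_mul (by positivity)]
  congr 3
  field_simp
  ring

/-- Plancherel-type inequality: if the push-forward of `μ` under the phase map is at most
`A` times Lebesgue measure, then `F ↦ oscInt μ P F` maps `L¹ ∩ L²(μ)` to `L²(ℝ²)` with squared
norm at most `(2π)² A`. -/
lemma lintegral_oscInt_sq_le (hP : Measurable P) (hF : Integrable F μ) (hFm : Measurable F)
    (hA : μ.map P ≤ A • volume) :
    ∫⁻ u, ‖oscInt μ P F u‖ₑ ^ 2 ≤ ENNReal.ofReal ((2 * π) ^ 2) * A * ∫⁻ x, ‖F x‖ₑ ^ 2 ∂μ := by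
  have hcont := (continuous_oscInt hP hF).measurable
  let ε : ℕ → ℝ := fun n => 1 / ((n : ℝ) + 1)
  have hε (n : ℕ) : 0 < ε n := by positivity
  have hlim (u : ℝ × ℝ) : Filter.Tendsto
      (fun n => ENNReal.ofReal (gauss (ε n) u) * ‖oscInt μ P F u‖ₑ ^ 2) Filter.atTop
      (nhds (‖oscInt μ P F u‖ₑ ^ 2)) := by
    have h1 : Filter.Tendsto (fun n => gauss (ε n) u) Filter.atTop (nhds (gauss 0 u)) := by
      have hc : Continuous fun e => gauss e u := by unfold gauss; fun_prop
      exact (hc.tendsto 0).comp tendsto_one_div_add_atTop_nhds_zero_nat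
    have h2 := ENNReal.Tendsto.mul_const (b := ‖oscInt μ P F u‖ₑ ^ 2)
      (ENNReal.tendsto_ofReal h1) (Or.inl (by simp [gauss]))
    simpa [gauss] using h2
  calc ∫⁻ u, ‖oscInt μ P F u‖ₑ ^ 2
      = ∫⁻ u, Filter.liminf (fun n => ENNReal.ofReal (gauss (ε n) u) * ‖oscInt μ P F u‖ₑ ^ 2)
          Filter.atTop := by
        congr 1; ext u; exact (hlim u).liminf_eq.symm
    _ ≤ Filter.liminf (fun n => ∫⁻ u, ENNReal.ofReal (gauss (ε n) u) * ‖oscInt μ P F u‖ₑ ^ 2)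
          Filter.atTop := by
        refine lintegral_liminf_le fun n => ?_
        have := (continuous_gauss (ε n)).measurable
        fun_prop
    _ ≤ _ := by
        refine Filter.liminf_le_of_frequently_le' (Filter.Frequently.of_forall fun n => ?_)
        exact lintegral_gauss_mul_oscInt_le (hε n) hP hF hFm hA

end OscInt

lemma ft2_eq_oscInt (g : ℝ × ℝ → ℂ) : ft2 g = oscInt volume (fun y => -y) g := by
  ext ξ
  simp only [ft2, oscInt, Prod.fst_neg, Prod.snd_neg]
  congr 1; ext y
  congr 2
  push_cast
  ring

lemma lintegral_ft2_sq_le {g : ℝ × ℝ → ℂ} (hg : Integrable g) :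
    ∫⁻ ξ, ‖ft2 g ξ‖ₑ ^ 2 ≤ ENNReal.ofReal ((2 * π) ^ 2) * ∫⁻ x, ‖g x‖ₑ ^ 2 := by
  have hae := hg.1.ae_eq_mk
  have h1 : ft2 g = oscInt volume (fun y => -y) (hg.1.mk g) := by
    rw [ft2_eq_oscInt]
    ext ξ
    refine integral_congr_ae ?_
    filter_upwards [hae] with x hx
    rw [hx]
  have h2 : ∫⁻ x, ‖g x‖ₑ ^ 2 = ∫⁻ x, ‖hg.1.mk g x‖ₑ ^ 2 := by
    refine lintegral_congr_ae ?_
    filter_upwards [hae] with x hx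
    rw [← hx]
  have h3 : Measure.map (fun y : ℝ × ℝ => -y) volume ≤ (1 : ℝ≥0∞) • volume := by
    rw [one_smul]
    exact (Measure.measurePreserving_neg (volume : Measure (ℝ × ℝ))).map_eq.le
  rw [h1, h2]
  have h4 := lintegral_oscInt_sq_le measurable_neg (hg.congr hae)
    hg.1.stronglyMeasurable_mk.measurable h3
  rwa [mul_one] at h4

/-- Fourier transforms of non-integrable functions vanish by the convention on Bochner
integrals. -/
lemma ft2_of_not_integrable {g : ℝ × ℝ → ℂ} (hg : ¬ Integrable g) (ξ : ℝ × ℝ) : ft2 g ξ = 0 := by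
  refine integral_undef fun h => hg ?_
  have h1 := h.bdd_mul (c := 1)
    (f := fun y : ℝ × ℝ => Complex.exp (Complex.I * ((y.1 * ξ.1 + y.2 * ξ.2 : ℝ) : ℂ)))
    (Continuous.aestronglyMeasurable (by fun_prop))
    (Filter.Eventually.of_forall fun y => (norm_cexp_I_mul _).le)
  refine h1.congr (Filter.Eventually.of_forall fun y => ?_)
  dsimp only
  rw [← mul_assoc, ← Complex.exp_add, neg_mul, add_neg_cancel, Complex.exp_zero, one_mul]

lemma continuous_enorm2 : Continuous enorm2 := by unfold enorm2; fun_prop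

lemma fst_div_enorm2_add_one_nonneg (ξ : ℝ × ℝ) : 0 ≤ ξ.1 / enorm2 ξ + 1 := by
  have h0 : 0 ≤ enorm2 ξ := Real.sqrt_nonneg _
  have h : |ξ.1| ≤ enorm2 ξ := Real.abs_le_sqrt (by nlinarith [sq_nonneg ξ.2])
  rcases h0.eq_or_lt with h1 | h1
  · rw [← h1]; simp
  · rw [div_add_one h1.ne']
    have := neg_le_of_abs_le h
    exact div_nonneg (by linarith) h0

lemma hasDerivAt_add_enorm2 {y : ℝ} (hy : y ≠ 0) (x : ℝ) :
    HasDerivAt (fun x => x + enorm2 (x, y)) (x / enorm2 (x, y) + 1) x := by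
  have hpos : x ^ 2 + y ^ 2 ≠ 0 := by positivity
  have h : HasDerivAt (fun x => √(x ^ 2 + y ^ 2)) (x / √(x ^ 2 + y ^ 2)) x := by
    convert ((hasDerivAt_pow 2 x).add_const (y ^ 2)).sqrt hpos using 1
    field_simp
    norm_num [mul_comm]
  rw [add_comm (x / _)]
  exact (hasDerivAt_id x).add h

/-- A function with derivative at least `c > 0` on `s` shrinks the measure of `s` by at most the
factor `c`. -/
lemma volume_le_of_le_deriv {f f' : ℝ → ℝ} {s : Set ℝ} {c : ℝ} (hc : 0 < c)
    (hs : MeasurableSet s) (hf : ∀ x ∈ s, HasDerivWithinAt f (f' x) s x) (hm : MonotoneOn f s)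
    (hf' : ∀ x ∈ s, c ≤ f' x) : volume s ≤ ENNReal.ofReal (1 / c) * volume (f '' s) := by
  rw [← lintegral_deriv_eq_volume_image_of_monotoneOn hs hf hm]
  calc volume s = ENNReal.ofReal (1 / c) * ∫⁻ _ in s, ENNReal.ofReal c := by
        rw [setLIntegral_const, ← mul_assoc, ← ENNReal.ofReal_mul (by positivity),
          one_div_mul_cancel hc.ne', ENNReal.ofReal_one, one_mul]
    _ ≤ _ := by
        gcongr ENNReal.ofReal (1 / c) * ?_
        exact setLIntegral_mono' hs fun x hx => ENNReal.ofReal_le_ofReal (hf' x hx)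

/-- The set of frequencies at which `∂₁(ξ₁ + |ξ|) ≥ c`. -/
def awaySet (c : ℝ) : Set (ℝ × ℝ) := {ξ | c ≤ ξ.1 / enorm2 ξ + 1}

lemma measurableSet_awaySet (c : ℝ) : MeasurableSet (awaySet c) := by
  have := continuous_enorm2.measurable
  exact measurableSet_le measurable_const (by fun_prop)

/-- The phase map `ξ ↦ (ξ₁ + |ξ|, ξ₂)`. -/
def conePhase (ξ : ℝ × ℝ) : ℝ × ℝ := (ξ.1 + enorm2 ξ, ξ.2)

lemma measurable_conePhase : Measurable conePhase := by
  have := continuous_enorm2.measurable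
  unfold conePhase
  fun_prop

lemma map_conePhase_le {c : ℝ} (hc : 0 < c) :
    (volume.restrict (awaySet c)).map conePhase ≤ ENNReal.ofReal (1 / c) • volume := by
  refine Measure.le_iff.2 fun T hT => ?_
  rw [Measure.map_apply measurable_conePhase hT,
    Measure.restrict_apply (measurable_conePhase hT), Measure.smul_apply, smul_eq_mul,
    Measure.volume_eq_prod]
  have hms := (measurable_conePhase hT).inter (measurableSet_awaySet c)
  rw [Measure.prod_apply_symm hms, Measure.prod_apply_symm hT,
    ← lintegral_const_mul _ (measurable_measure_prodMk_right hT)]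
  refine lintegral_mono_ae ?_
  filter_upwards [Measure.ae_ne volume (0 : ℝ)] with y hy
  have hmono : Monotone fun x => x + enorm2 (x, y) :=
    monotone_of_hasDerivAt_nonneg (hasDerivAt_add_enorm2 hy)
      fun x => fst_div_enorm2_add_one_nonneg (x, y)
  refine (volume_le_of_le_deriv hc (measurable_prodMk_right hms)
    (fun x _ => (hasDerivAt_add_enorm2 hy x).hasDerivWithinAt) (hmono.monotoneOn _)
    fun x hx => hx.2).trans ?_
  gcongr
  rintro _ ⟨x, hx, rfl⟩
  exact hx.1

/-- Integration over a slab `{x₁ - t ∈ E}` by slicing along `x₁ - t = s`. -/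
lemma lintegral_slab_le {H : (ℝ × ℝ) × ℝ → ℝ≥0∞} (hH : Measurable H) {E : Set ℝ}
    (hE : MeasurableSet E) {K : ℝ≥0∞}
    (hK : ∀ s, ∫⁻ u : ℝ × ℝ, H ((s + u.1, u.2), u.1) ≤ K) :
    ∫⁻ z in {z : (ℝ × ℝ) × ℝ | z.1.1 - z.2 ∈ E}, H z ≤ K * volume E := by
  have hD : MeasurableSet {z : (ℝ × ℝ) × ℝ | z.1.1 - z.2 ∈ E} :=
    (show Measurable fun z : (ℝ × ℝ) × ℝ => z.1.1 - z.2 by fun_prop) hE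
  have hind : Measurable (E.indicator (1 : ℝ → ℝ≥0∞)) := measurable_one.indicator hE
  let H' : (ℝ × ℝ) × ℝ → ℝ≥0∞ := fun z => E.indicator 1 (z.1.1 - z.2) * H z
  have hH' : Measurable H' := by fun_prop
  calc ∫⁻ z in {z : (ℝ × ℝ) × ℝ | z.1.1 - z.2 ∈ E}, H z
      = ∫⁻ z, H' z := by
        rw [← lintegral_indicator hD]
        congr 1; ext z
        by_cases hz : z.1.1 - z.2 ∈ E <;> simp [H', hz]
    _ = ∫⁻ t, ∫⁻ y, ∫⁻ x, H' ((x, y), t) := by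
        rw [Measure.volume_eq_prod, lintegral_prod_symm _ hH'.aemeasurable]
        congr 1; ext t
        rw [Measure.volume_eq_prod, lintegral_prod_symm _ (Measurable.aemeasurable (by fun_prop))]
    _ = ∫⁻ t, ∫⁻ y, ∫⁻ s, H' ((s + t, y), t) := by
        congr 1; ext t
        congr 1; ext y
        exact (lintegral_add_right_eq_self (fun x => H' ((x, y), t)) t).symm
    _ = ∫⁻ u : ℝ × ℝ, ∫⁻ s, H' ((s + u.1, u.2), u.1) := by
        rw [Measure.volume_eq_prod, lintegral_prod]
        refine Measurable.aemeasurable (Measurable.lintegral_prod_right ?_)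
        fun_prop
    _ = ∫⁻ s, ∫⁻ u : ℝ × ℝ, H' ((s + u.1, u.2), u.1) :=
        lintegral_lintegral_swap (Measurable.aemeasurable (by fun_prop))
    _ ≤ ∫⁻ s, K * E.indicator 1 s := by
        refine lintegral_mono fun s => ?_
        simp only [H', add_sub_cancel_right]
        rw [lintegral_const_mul _ (by fun_prop), mul_comm]
        gcongr
        exact hK s
    _ = K * volume E := by
        rw [lintegral_const_mul _ hind, lintegral_indicator_one hE]

lemma eLpNorm_two_sq {α : Type*} [MeasurableSpace α] (f : α → ℂ) (μ : Measure α) :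
    eLpNorm f 2 μ ^ 2 = ∫⁻ x, ‖f x‖ₑ ^ 2 ∂μ := by
  have h := eLpNorm_nnreal_pow_eq_lintegral (μ := μ) (f := f) (p := 2) two_ne_zero
  simpa using h

lemma IsLPBump.le_one_s18 {φ : ℝ → ℝ} (hφ : IsLPBump φ) (s : ℝ) : φ s ≤ 1 := by
  obtain ⟨-, h0, hsupp, hsum⟩ := hφ
  rcases lt_or_ge 0 s with hs | hs
  · have := le_hasSum (hsum s hs) 0 fun j _ => h0 _
    simpa using this
  · by_contra! h
    have := (hsupp (show φ s ≠ 0 by linarith)).1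
    linarith

lemma mem_awaySet_of_psiA_ne_zero {φ : ℝ → ℝ} (hφ : IsLPBump φ) {m : ℤ} {ξ : ℝ × ℝ}
    (h : psiA φ m ξ ≠ 0) : ξ ∈ awaySet (999 / 1000 * (2 : ℝ) ^ (-m)) := by
  have h1 := (hφ.2.2.1 h).1
  rw [abs_of_nonneg (fst_div_enorm2_add_one_nonneg ξ)] at h1
  have h2 : (0 : ℝ) < 2 ^ m := by positivity
  change 999 / 1000 * (2 : ℝ) ^ (-m) ≤ ξ.1 / enorm2 ξ + 1
  rw [zpow_neg, ← div_eq_mul_inv, div_le_iff₀ h2]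
  linarith

lemma measurable_psiA {φ : ℝ → ℝ} (hφ : IsLPBump φ) (m : ℤ) : Measurable (psiA φ m) := by
  have h1 := hφ.1.continuous.measurable
  have h2 := continuous_enorm2.measurable
  unfold psiA
  fun_prop

/-- The half-wave operator with angular cutoff `ψ_m`, applied to `g`. -/
def slabOp (φ : ℝ → ℝ) (m : ℤ) (g : ℝ × ℝ → ℂ) (z : (ℝ × ℝ) × ℝ) : ℂ :=
  ∫ ξ : ℝ × ℝ, Complex.exp (Complex.I *
    ((z.1.1 * ξ.1 + z.1.2 * ξ.2 + z.2 * enorm2 ξ : ℝ) : ℂ)) * ft2 g ξ * ((psiA φ m ξ : ℝ) : ℂ)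

lemma slabOp_eq_oscInt {φ : ℝ → ℝ} (hφ : IsLPBump φ) (m : ℤ) (g : ℝ × ℝ → ℂ) (s : ℝ)
    (u : ℝ × ℝ) :
    slabOp φ m g ((s + u.1, u.2), u.1) =
      oscInt (volume.restrict (awaySet (999 / 1000 * (2 : ℝ) ^ (-m)))) conePhase
        (fun ξ => Complex.exp (Complex.I * ((s * ξ.1 : ℝ) : ℂ)) *
          (ft2 g ξ * ((psiA φ m ξ : ℝ) : ℂ))) u := by
  rw [oscInt, setIntegral_eq_integral_of_forall_compl_eq_zero]
  · rw [slabOp]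
    congr 1; ext ξ
    rw [← mul_assoc, ← mul_assoc, ← Complex.exp_add]
    congr 3
    simp only [conePhase]
    push_cast
    ring
  · intro ξ hξ
    have : psiA φ m ξ = 0 := by
      by_contra h
      exact hξ (mem_awaySet_of_psiA_ne_zero hφ h)
    simp [this]

lemma continuous_slabOp {φ : ℝ → ℝ} (m : ℤ) {g : ℝ × ℝ → ℂ}
    (hF : Integrable fun ξ => ft2 g ξ * ((psiA φ m ξ : ℝ) : ℂ)) : Continuous (slabOp φ m g) := by
  unfold slabOp
  simp only [mul_assoc (Complex.exp _)]
  have h2 := continuous_enorm2.measurable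
  refine continuous_of_dominated (bound := fun ξ => ‖ft2 g ξ * ((psiA φ m ξ : ℝ) : ℂ)‖)
    (fun z => ?_) (fun z => ?_) hF.norm ?_
  · exact (Measurable.aestronglyMeasurable (by fun_prop)).mul hF.1
  · exact Filter.Eventually.of_forall fun x => by rw [norm_mul, norm_cexp_I_mul, one_mul]
  · exact Filter.Eventually.of_forall fun x => by fun_prop

lemma lintegral_slabOp_slice_le {φ : ℝ → ℝ} (hφ : IsLPBump φ) (m : ℤ) {g : ℝ × ℝ → ℂ}
    (hg : Integrable g) (hF : Integrable fun ξ => ft2 g ξ * ((psiA φ m ξ : ℝ) : ℂ)) (s : ℝ) :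
    ∫⁻ u : ℝ × ℝ, ‖slabOp φ m g ((s + u.1, u.2), u.1)‖ₑ ^ 2 ≤
      ENNReal.ofReal ((2 * π) ^ 2) * ENNReal.ofReal (1 / (999 / 1000 * (2 : ℝ) ^ (-m))) *
        (ENNReal.ofReal ((2 * π) ^ 2) * ∫⁻ x, ‖g x‖ₑ ^ 2) := by
  simp_rw [slabOp_eq_oscInt hφ]
  have hmeas := measurable_psiA hφ m
  have hft := (continuous_ft2 hg).measurable
  refine (lintegral_oscInt_sq_le measurable_conePhase ?_ (by fun_prop)
    (map_conePhase_le (by positivity))).trans ?_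
  · refine (hF.bdd_mul (c := 1) (Continuous.aestronglyMeasurable (by fun_prop))
      (Filter.Eventually.of_forall fun y => (norm_cexp_I_mul _).le)).restrict
  · gcongr
    refine le_trans ?_ (lintegral_ft2_sq_le hg)
    refine (setLIntegral_le_lintegral _ _).trans (lintegral_mono fun ξ => ?_)
    gcongr
    rw [← ofReal_norm, ← ofReal_norm]
    refine ENNReal.ofReal_le_ofReal ?_
    rw [norm_mul, norm_cexp_I_mul, one_mul, norm_mul, Complex.norm_real,
      Real.norm_of_nonneg (show 0 ≤ psiA φ m ξ from hφ.2.1 _)]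
    exact mul_le_of_le_one_right (norm_nonneg _) (hφ.le_one_s18 _)

/-- Lemma 3.8 (improved `L²` estimate on thin slabs): with
`D_l = {(x,t) : 2^{−2l} ≤ |x₁ − t| ≤ 2^{−2l+1}}`,
`‖∫ e^{i(x·ξ+t|ξ|)} ĝ(ξ) ψ_m(ξ) dξ‖_{L²(D_l)} ≲ 2^{m/2−l} ‖g‖_{L²(ℝ²)}`,
with constant independent of `l, m, g`. -/
theorem thin_slab_L2_estimate (φ : ℝ → ℝ) (hφ : IsLPBump φ) :
    ∃ C : ℝ, 0 < C ∧ ∀ l m : ℤ, 0 ≤ l → 0 ≤ m → ∀ g : ℝ × ℝ → ℂ,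
      eLpNorm (fun z : (ℝ × ℝ) × ℝ =>
          ∫ ξ : ℝ × ℝ,
            Complex.exp (Complex.I *
                ((z.1.1 * ξ.1 + z.1.2 * ξ.2 + z.2 * enorm2 ξ : ℝ) : ℂ)) *
              ft2 g ξ * ((psiA φ m ξ : ℝ) : ℂ)) 2
          (volume.restrict
            {z : (ℝ × ℝ) × ℝ |
              (2:ℝ) ^ (-(2 * l)) ≤ |z.1.1 - z.2| ∧ |z.1.1 - z.2| ≤ (2:ℝ) ^ (-(2 * l) + 1)}) ≤
        ENNReal.ofReal (C * (2:ℝ) ^ ((m:ℝ)/2 - (l:ℝ))) * eLpNorm g 2 volume := by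
  refine ⟨3 * (2 * π) ^ 2, by positivity, fun l m _ _ g => ?_⟩
  change eLpNorm (slabOp φ m g) 2 _ ≤ _
  by_cases hg : Integrable g
  swap
  · have : slabOp φ m g = 0 := by
      ext z; simp [slabOp, ft2_of_not_integrable hg]
    simp [this]
  by_cases hF : Integrable fun ξ => ft2 g ξ * ((psiA φ m ξ : ℝ) : ℂ)
  swap
  · have : slabOp φ m g = 0 := by
      ext z
      refine integral_undef fun h => hF ?_
      have hc := continuous_enorm2
      have h1 := h.bdd_mul (c := 1)
        (f := fun ξ : ℝ × ℝ => Complex.exp (Complex.I *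
          ((-(z.1.1 * ξ.1 + z.1.2 * ξ.2 + z.2 * enorm2 ξ) : ℝ) : ℂ)))
        (Continuous.aestronglyMeasurable (by fun_prop))
        (Filter.Eventually.of_forall fun y => (norm_cexp_I_mul _).le)
      refine h1.congr (Filter.Eventually.of_forall fun ξ => ?_)
      dsimp only
      rw [← mul_assoc, ← mul_assoc, ← Complex.exp_add, ← mul_add, ← Complex.ofReal_add,
        neg_add_cancel, Complex.ofReal_zero, mul_zero, Complex.exp_zero, one_mul]
    simp [this]
  rw [← ENNReal.pow_le_pow_left_iff two_ne_zero, mul_pow, eLpNorm_two_sq, eLpNorm_two_sq]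
  let b : ℝ := (2 : ℝ) ^ (-(2 * l))
  have hb : 0 < b := by positivity
  have hsub : {z : (ℝ × ℝ) × ℝ |
      (2:ℝ) ^ (-(2 * l)) ≤ |z.1.1 - z.2| ∧ |z.1.1 - z.2| ≤ (2:ℝ) ^ (-(2 * l) + 1)} ⊆
      {z : (ℝ × ℝ) × ℝ | z.1.1 - z.2 ∈ Icc (-(2 * b)) (2 * b)} := by
    rintro z ⟨-, hz⟩
    rw [zpow_add_one₀ two_ne_zero, mul_comm] at hz
    exact abs_le.1 hz
  refine (lintegral_mono_set hsub).trans ?_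
  have hcont := (continuous_slabOp m hF).measurable
  refine (lintegral_slab_le (by fun_prop) measurableSet_Icc
    (lintegral_slabOp_slice_le hφ m hg hF)).trans ?_
  rw [Real.volume_Icc, ← mul_assoc, mul_right_comm]
  gcongr
  rw [← ENNReal.ofReal_mul (by positivity), ← ENNReal.ofReal_mul (by positivity),
    ← ENNReal.ofReal_mul (by positivity), ← ENNReal.ofReal_pow (by positivity)]
  refine ENNReal.ofReal_le_ofReal ?_
  have hpow : ((2 : ℝ) ^ ((m : ℝ) / 2 - (l : ℝ))) ^ 2 = 2 ^ m * b := by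
    rw [← Real.rpow_natCast, ← Real.rpow_mul zero_le_two, ← Real.rpow_intCast,
      show b = (2 : ℝ) ^ ((-(2 * l) : ℤ) : ℝ) from (Real.rpow_intCast _ _).symm,
      ← Real.rpow_add two_pos]
    congr 1
    push_cast
    ring
  rw [mul_pow _ ((2 : ℝ) ^ _) 2, hpow, zpow_neg]
  have h2 : (0 : ℝ) < 2 ^ m := by positivity
  have hX : 0 ≤ (2 * π) ^ 4 * (2 ^ m * b) := by positivity
  calc _ = (4000 / 999) * ((2 * π) ^ 4 * (2 ^ m * b)) := by
        field_simp
        ring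
    _ ≤ 9 * ((2 * π) ^ 4 * (2 ^ m * b)) := by gcongr; norm_num
    _ = _ := by ring

end
end
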